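/- arXiv:2106.10166 — 3 statements merged into one kernel-verified Lean document; each statement's English description precedes it below -/
import Mathlib

section
/- For every integer K ≥ 3 and every integer T with T > 36·log(K) there exists a fixed-budget strategy π with horizon T (the PD-MTB algorithm, which uses no knowledge of σ or of the gaps) such that for every σ > 0 and every σ²-sub-Gaussian K-armed bandit problem ν whose means (μ_k)_{k=1}^K form a nondecreasing sequence, the probability of error satisfies e_T^{ν,π} ≤ exp(−(1/48)·T·Δ_min²/σ² + 12·log(K)), where Δ_min = min_{k∈[K]} |μ_k − τ|. -/
open MeasureTheory

/-- Law of the history `(Y_1, …, Y_n)` of a fixed-budget strategy: at round `t + 1`, given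
the past history `h : Fin t → ℝ`, the sampling rule `π` selects the arm `π t h` and the
observation is drawn from `ν (π t h)` (sequential / Ionescu–Tulcea composition). -/
noncomputable def histMeasure {K : ℕ} (ν : Fin K → Measure ℝ)
    (π : (t : ℕ) → (Fin t → ℝ) → Fin K) : (n : ℕ) → Measure (Fin n → ℝ)
  | 0 => Measure.dirac (fun i => Fin.elim0 i)
  | n + 1 => (histMeasure ν π n).bind (fun h => (ν (π n h)).map (Fin.snoc h))

/-- The error event: some arm is misclassified. `Qhat y k = true` encodes the label `+1`
(i.e. the prediction that `μ k ≥ τ`), `false` encodes the label `-1`. -/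
def errSet {K T : ℕ} (Qhat : (Fin T → ℝ) → Fin K → Bool) (μ : Fin K → ℝ) (τ : ℝ) :
    Set (Fin T → ℝ) :=
  {y | ∃ k, (Qhat y k = true) ≠ (τ ≤ μ k)}

/-- A distribution `ν` with mean `m` is `σ2`-sub-Gaussian if
`∫ exp (t (x − m)) dν(x) ≤ exp (σ2 t² / 2)` for all `t : ℝ`. -/
def IsSubGaussianArm (σ2 : ℝ) (m : ℝ) (ν : Measure ℝ) : Prop :=
  ∀ t : ℝ, ∫⁻ x, ENNReal.ofReal (Real.exp (t * (x - m))) ∂ν ≤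
    ENNReal.ofReal (Real.exp (σ2 * t ^ 2 / 2))

namespace MTB

section generic

theorem kernel_meas {K : ℕ} (ν : Fin K → Measure ℝ) [∀ k, IsProbabilityMeasure (ν k)] (n : ℕ)
    (f : (Fin n → ℝ) → Fin K) (hf : Measurable f) :
    Measurable (fun h : Fin n → ℝ => (ν (f h)).map (Fin.snoc (α := fun _ => ℝ) h)) := by
  have hsn : Measurable (fun p : (Fin n → ℝ) × ℝ =>
      (Fin.snoc (α := fun _ => ℝ) p.1 p.2 : Fin (n+1) → ℝ)) := by
    refine measurable_pi_lambda _ fun i => ?_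
    refine Fin.lastCases ?_ (fun j => ?_) i
    · simpa using measurable_snd
    · simp only [Fin.snoc_castSucc]
      exact (measurable_pi_apply j).comp measurable_fst
  refine Measure.measurable_of_measurable_coe _ fun s hs => ?_
  have h1 : ∀ h : Fin n → ℝ, (ν (f h)).map (Fin.snoc (α := fun _ => ℝ) h) s
      = (fun q : Fin K × (Fin n → ℝ) => ν q.1 (Fin.snoc (α := fun _ => ℝ) q.2 ⁻¹' s)) (f h, h) := by
    intro h
    exact Measure.map_apply (hsn.comp measurable_prodMk_left) hs
  simp_rw [h1]
  refine Measurable.comp (g := fun q : Fin K × (Fin n → ℝ) => ν q.1 (Fin.snoc (α := fun _ => ℝ) q.2 ⁻¹' s))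
    ?_ (hf.prodMk measurable_id)
  refine measurable_from_prod_countable_right fun k => ?_
  exact measurable_measure_prodMk_left (ν := ν k) (hsn hs)

/-- State of a state machine driven by the history. -/
def st {S : Type} (step : ℕ → S → ℝ → S) (s0 : S) : (t : ℕ) → (Fin t → ℝ) → S
  | 0, _ => s0
  | t + 1, h => step t (st step s0 t (fun i => h i.castSucc)) (h (Fin.last t))

theorem st_meas {S : Type} [MeasurableSpace S] (step : ℕ → S → ℝ → S) (s0 : S)
    (hs : ∀ t, Measurable (fun p : S × ℝ => step t p.1 p.2)) (t : ℕ) :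
    Measurable (st step s0 t) := by
  induction t with
  | zero => exact measurable_const
  | succ t ih =>
    refine (hs t).comp (Measurable.prodMk (ih.comp ?_) (measurable_pi_apply _))
    exact measurable_pi_lambda _ fun i => measurable_pi_apply _

theorem super {S : Type} [MeasurableSpace S] {K : ℕ} (ν : Fin K → Measure ℝ)
    [∀ k, IsProbabilityMeasure (ν k)]
    (step : ℕ → S → ℝ → S) (s0 : S) (arm : ℕ → S → Fin K)
    (hs : ∀ t, Measurable (fun p : S × ℝ => step t p.1 p.2))
    (ha : ∀ t, Measurable (arm t)) (V : ℕ → S → ENNReal) (hV : ∀ t, Measurable (V t))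
    (hstep : ∀ t s, ∫⁻ y, V (t+1) (step t s y) ∂(ν (arm t s)) ≤ V t s) (T : ℕ) :
    ∫⁻ h, V T (st step s0 T h) ∂(histMeasure ν (fun t h => arm t (st step s0 t h)) T) ≤ V 0 s0 := by
  induction T with
  | zero =>
    simp only [histMeasure]
    rw [lintegral_dirac' _ (show Measurable fun h => V 0 (st step s0 0 h) from
      (hV 0).comp (st_meas step s0 hs 0))]
    exact le_rfl
  | succ t ih =>
    refine le_trans ?_ ih
    simp only [histMeasure]
    have hm : Measurable fun h => V (t+1) (st step s0 (t+1) h) :=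
      (hV (t+1)).comp (st_meas step s0 hs (t+1))
    rw [Measure.lintegral_bind
      (kernel_meas ν t (fun h => arm t (st step s0 t h)) ((ha t).comp (st_meas step s0 hs t))).aemeasurable hm.aemeasurable]
    refine lintegral_mono fun h => ?_
    refine le_trans (le_of_eq ?_) (hstep t (st step s0 t h))
    rw [lintegral_map hm]
    · simp [st]
    · refine measurable_pi_lambda _ fun i => ?_
      refine Fin.lastCases ?_ (fun j => ?_) i
      · simp only [Fin.snoc_last]; exact measurable_id
      · simp

end generic

section algo

variable {K : ℕ}

noncomputable def wt (v : Fin (K+1) → ℕ) (j : Fin (K+1)) : ℝ := (1/4 : ℝ) ^ v j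

theorem wt_pos (v : Fin (K+1) → ℕ) (j) : 0 < wt v j := by unfold wt; positivity

theorem exists_med (v : Fin (K+1) → ℕ) : ∃ m : Fin (K+1),
    0 ≤ ∑ j, (if j < m then - wt v j else wt v j) ∧
    0 ≤ ∑ j, (if m < j then - wt v j else wt v j) := by
  classical
  let s : Finset (Fin (K+1)) :=
    Finset.univ.filter fun m => 0 ≤ ∑ j, (if j < m then - wt v j else wt v j)
  have h0 : (0 : Fin (K+1)) ∈ s := by
    simp only [s, Finset.mem_filter, Finset.mem_univ, true_and]
    refine Finset.sum_nonneg fun j _ => ?_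
    simp [(wt_pos v j).le]
  have hmem := s.max'_mem ⟨0, h0⟩
  set m := s.max' ⟨0, h0⟩ with hm
  refine ⟨m, (Finset.mem_filter.1 hmem).2, ?_⟩
  by_cases hK : m.val < K
  · let m' : Fin (K+1) := ⟨m.val + 1, by omega⟩
    have hn : m' ∉ s := fun h => by
      have := s.le_max' m' h
      rw [← hm, Fin.le_def] at this
      simp [m'] at this
    simp only [s, Finset.mem_filter, Finset.mem_univ, true_and, not_le] at hn
    have : ∑ j, (if m < j then - wt v j else wt v j)
        = - ∑ j, (if j < m' then - wt v j else wt v j) := by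
      rw [← Finset.sum_neg_distrib]
      refine Finset.sum_congr rfl fun j _ => ?_
      have : j < m' ↔ ¬ m < j := by simp only [Fin.lt_def, m']; omega
      by_cases h : m < j <;> simp [this, h]
    rw [this]; linarith
  · refine Finset.sum_nonneg fun j _ => ?_
    have : ¬ m < j := by rw [Fin.lt_def]; omega
    simp [this, (wt_pos v j).le]

noncomputable def med (v : Fin (K+1) → ℕ) : Fin (K+1) := Classical.choose (exists_med v)

theorem med_spec (v : Fin (K+1) → ℕ) :
    0 ≤ ∑ j, (if j < med v then - wt v j else wt v j) ∧
    0 ≤ ∑ j, (if med v < j then - wt v j else wt v j) := Classical.choose_spec (exists_med v)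

/-- One phase update of the miss counts. -/
noncomputable def upd (v : Fin (K+1) → ℕ) (P Q : Bool) : Fin (K+1) → ℕ := fun j =>
  v j + if 0 < (med v).val ∧ P = true then (if med v ≤ j then 1 else 0)
    else if (med v).val < K ∧ Q = true then (if j ≤ med v then 1 else 0)
    else (if j = med v then 0 else 1)

noncomputable def pot (j0 : Fin (K+1)) (v : Fin (K+1) → ℕ) : ℝ :=
  (∑ j, wt v j - wt v j0) / wt v j0

theorem num_nonneg (j0 : Fin (K+1)) (v : Fin (K+1) → ℕ) : 0 ≤ ∑ j, wt v j - wt v j0 := by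
  have := Finset.single_le_sum (f := fun j => wt v j) (fun j _ => (wt_pos v j).le)
    (Finset.mem_univ j0)
  linarith

theorem pot_nonneg (j0 : Fin (K+1)) (v : Fin (K+1) → ℕ) : 0 ≤ pot j0 v :=
  div_nonneg (num_nonneg j0 v) (wt_pos v j0).le

theorem pot_zero (j0 : Fin (K+1)) : pot j0 (fun _ => 0) = K := by
  simp [pot, wt]

theorem pot_wrong (j0 : Fin (K+1)) (v : Fin (K+1) → ℕ) (P Q : Bool) :
    pot j0 (upd v P Q) ≤ 4 * pot j0 v := by
  have hw : ∀ j, wt (upd v P Q) j ≤ wt v j ∧ wt v j / 4 ≤ wt (upd v P Q) j := by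
    intro j
    have hp := wt_pos v j
    have : upd v P Q j = v j ∨ upd v P Q j = v j + 1 := by
      unfold upd; split_ifs <;> simp
    unfold wt at *
    rcases this with h | h <;> rw [h]
    · constructor <;> linarith
    · rw [pow_succ]; constructor <;> linarith
  have hsub : ∀ u : Fin (K+1) → ℕ, ∑ j, wt u j - wt u j0 = ∑ j ∈ Finset.univ.erase j0, wt u j := by
    intro u
    rw [← Finset.add_sum_erase _ _ (Finset.mem_univ j0)]; ring
  have h1 : ∑ j, wt (upd v P Q) j - wt (upd v P Q) j0 ≤ ∑ j, wt v j - wt v j0 := by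
    rw [hsub, hsub]; exact Finset.sum_le_sum fun j _ => (hw j).1
  unfold pot
  have hp := wt_pos v j0
  rw [div_le_iff₀ (wt_pos _ _)]
  calc _ ≤ ∑ j, wt v j - wt v j0 := h1
    _ = 4 * ((∑ j, wt v j - wt v j0) / wt v j0) * (wt v j0 / 4) := by field_simp
    _ ≤ _ := by
      refine mul_le_mul_of_nonneg_left (hw j0).2 ?_
      have := pot_nonneg j0 v
      unfold pot at this; linarith

theorem pot_right_aux (j0 : Fin (K+1)) (v u : Fin (K+1) → ℕ) (h0 : u j0 = v j0)
    (h : 0 ≤ ∑ j, (5/8 * wt v j - wt u j) + 3/8 * wt v j0) :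
    pot j0 u ≤ 5/8 * pot j0 v := by
  have e : wt u j0 = wt v j0 := by simp [wt, h0]
  unfold pot
  rw [e, ← mul_div_assoc]
  refine div_le_div_of_nonneg_right ?_ (wt_pos _ _).le
  rw [Finset.sum_sub_distrib, ← Finset.mul_sum] at h
  linarith

theorem wt_of_succ (v u : Fin (K+1) → ℕ) (j) (h : u j = v j + 1) : wt u j = wt v j / 4 := by
  simp only [wt, h, pow_succ]; ring

theorem wt_of_eq (v u : Fin (K+1) → ℕ) (j) (h : u j = v j) : wt u j = wt v j := by
  simp only [wt, h]

theorem pot_right (j0 : Fin (K+1)) (v : Fin (K+1) → ℕ) (P Q : Bool)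
    (hP : 0 < (med v).val → (P = true ↔ j0 < med v))
    (hQ : (med v).val < K → (Q = true ↔ med v < j0)) :
    pot j0 (upd v P Q) ≤ 5/8 * pot j0 v := by
  have hw0 := wt_pos v j0
  rcases lt_trichotomy j0 (med v) with h | h | h
  · have hm : 0 < (med v).val := by rw [Fin.lt_def] at h; omega
    have hPt := (hP hm).2 h
    have hu : ∀ j, upd v P Q j = v j + if med v ≤ j then 1 else 0 := by
      intro j; simp [upd, hPt, hm]
    apply pot_right_aux
    · rw [hu, if_neg (not_le.2 h)]; rfl
    · have : ∑ j, (5/8 * wt v j - wt (upd v P Q) j)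
          = 3/8 * ∑ j, (if j < med v then - wt v j else wt v j) := by
        rw [Finset.mul_sum]
        refine Finset.sum_congr rfl fun j _ => ?_
        by_cases hj : j < med v
        · rw [if_pos hj, wt_of_eq v (upd v P Q) j (by rw [hu, if_neg (not_le.2 hj)]; rfl)]; ring
        · rw [if_neg hj, wt_of_succ v (upd v P Q) j (by rw [hu, if_pos (not_lt.1 hj)])]; ring
      rw [this]
      have := (med_spec v).1
      linarith
  · have hu : ∀ j, upd v P Q j = v j + if j = med v then 0 else 1 := by
      intro j
      have h1 : ¬ (0 < (med v).val ∧ P = true) := by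
        rintro ⟨a, b⟩; exact absurd ((hP a).1 b) (by simp [h])
      have h2 : ¬ ((med v).val < K ∧ Q = true) := by
        rintro ⟨a, b⟩; exact absurd ((hQ a).1 b) (by simp [h])
      simp only [upd, if_neg h1, if_neg h2]
    apply pot_right_aux
    · rw [hu, if_pos h]; rfl
    · have : ∀ j, 5/8 * wt v j - wt (upd v P Q) j ≥ if j = j0 then -(3/8 * wt v j0) else 0 := by
        intro j
        have := wt_pos v j
        split_ifs with hj
        · subst hj; rw [wt_of_eq v (upd v P Q) _ (by rw [hu, if_pos h]; rfl)]; linarith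
        · rw [wt_of_succ v (upd v P Q) _ (by rw [hu, if_neg (h ▸ hj)])]; linarith
      have := Finset.sum_le_sum fun j (_ : j ∈ Finset.univ) => this j
      rw [Finset.sum_ite_eq'] at this
      simp only [Finset.mem_univ, if_true] at this
      linarith
  · have hm : (med v).val < K := by rw [Fin.lt_def] at h; omega
    have hQt := (hQ hm).2 h
    have hu : ∀ j, upd v P Q j = v j + if j ≤ med v then 1 else 0 := by
      intro j
      have h1 : ¬ (0 < (med v).val ∧ P = true) := by
        rintro ⟨a, b⟩; exact absurd ((hP a).1 b) (not_lt.2 h.le)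
      simp only [upd, if_neg h1]
      simp [hQt, hm]
    apply pot_right_aux
    · rw [hu, if_neg (not_le.2 h)]; rfl
    · have : ∑ j, (5/8 * wt v j - wt (upd v P Q) j)
          = 3/8 * ∑ j, (if med v < j then - wt v j else wt v j) := by
        rw [Finset.mul_sum]
        refine Finset.sum_congr rfl fun j _ => ?_
        by_cases hj : med v < j
        · rw [if_pos hj, wt_of_eq v (upd v P Q) j (by rw [hu, if_neg (not_le.2 hj)]; rfl)]; ring
        · rw [if_neg hj, wt_of_succ v (upd v P Q) j (by rw [hu, if_pos (not_lt.1 hj)])]; ring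
      rw [this]
      have := (med_spec v).2
      linarith

theorem pot_err (j0 : Fin (K+1)) (v : Fin (K+1) → ℕ) (h : med v ≠ j0) : 1 ≤ pot j0 v := by
  unfold pot
  rw [one_le_div (wt_pos _ _)]
  have key : ∀ p : Fin (K+1) → Prop, ∀ [DecidablePred p], p j0 →
      0 ≤ ∑ j, (if p j then - wt v j else wt v j) → wt v j0 ≤ ∑ j, wt v j - wt v j0 := by
    intro p _ hp hs
    rw [← Finset.add_sum_erase _ _ (Finset.mem_univ j0), if_pos hp] at hs
    have : ∑ j ∈ Finset.univ.erase j0, (if p j then - wt v j else wt v j)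
        ≤ ∑ j ∈ Finset.univ.erase j0, wt v j := by
      refine Finset.sum_le_sum fun j _ => ?_
      have := wt_pos v j
      split_ifs <;> linarith
    rw [← Finset.add_sum_erase _ (fun j => wt v j) (Finset.mem_univ j0)]
    linarith
  rcases lt_or_gt_of_ne h with h | h
  · exact key (fun j => med v < j) h (med_spec v).2
  · exact key (fun j => j < med v) h (med_spec v).1

/-- Phase index and round within the phase. -/
def clock (m : ℕ) : ℕ → ℕ × ℕ
  | 0 => (0, 0)
  | t + 1 => if (clock m t).2 + 1 < 2 * m then ((clock m t).1, (clock m t).2 + 1)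
      else ((clock m t).1 + 1, 0)

theorem clock_spec (m : ℕ) (hm : 0 < m) (t : ℕ) :
    (clock m t).1 * (2 * m) + (clock m t).2 = t ∧ (clock m t).2 < 2 * m := by
  induction t with
  | zero => simp [clock, hm]
  | succ t ih =>
    simp only [clock]
    split_ifs with h
    · exact ⟨by simp only; omega, h⟩
    · refine ⟨?_, by simp only; omega⟩
      simp only [Nat.add_mul]
      omega

abbrev S (K : ℕ) := (Fin (K+1) → ℕ) × ℝ × ℝ

noncomputable def armA (hK : 0 < K) (v : Fin (K+1) → ℕ) : Fin K :=
  ⟨(med v).val - 1, by have := (med v).2; omega⟩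

noncomputable def armB (hK : 0 < K) (v : Fin (K+1) → ℕ) : Fin K :=
  ⟨min (med v).val (K - 1), by omega⟩

noncomputable def arm (hK : 0 < K) (m : ℕ) (t : ℕ) (s : S K) : Fin K :=
  if (clock m t).2 < m then armA hK s.1 else armB hK s.1

/-- add the new sample -/
noncomputable def acc (τ : ℝ) (m : ℕ) (t : ℕ) (s : S K) (y : ℝ) : S K :=
  if (clock m t).2 < m then (s.1, s.2.1 + (y - τ), s.2.2) else (s.1, s.2.1, s.2.2 + (y - τ))

/-- close the phase -/
noncomputable def close (s : S K) : S K :=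
  (upd s.1 (decide (0 ≤ s.2.1)) (decide (s.2.2 < 0)), 0, 0)

noncomputable def step (τ : ℝ) (n m : ℕ) (t : ℕ) (s : S K) (y : ℝ) : S K :=
  if (clock m t).1 < n then
    (if (clock m t).2 + 1 < 2 * m then acc τ m t s y else close (acc τ m t s y))
  else s

theorem arm_meas (hK : 0 < K) (m t : ℕ) : Measurable (arm hK m t) := by
  unfold arm
  split_ifs
  · exact (measurable_of_countable (armA hK)).comp measurable_fst
  · exact (measurable_of_countable (armB hK)).comp measurable_fst

theorem close_meas : Measurable (close : S K → S K) := by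
  unfold close
  have h1 : Measurable (fun s : S K => decide (0 ≤ s.2.1)) :=
    measurable_to_bool (by
      have : (fun s : S K => decide (0 ≤ s.2.1)) ⁻¹' {true} = {s | 0 ≤ s.2.1} := by ext; simp
      rw [this]
      exact measurableSet_le measurable_const (by fun_prop))
  have h2 : Measurable (fun s : S K => decide (s.2.2 < 0)) :=
    measurable_to_bool (by
      have : (fun s : S K => decide (s.2.2 < 0)) ⁻¹' {true} = {s | s.2.2 < 0} := by ext; simp
      rw [this]
      exact measurableSet_lt (by fun_prop) measurable_const)
  refine Measurable.prodMk ?_ measurable_const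
  exact (measurable_of_countable
    (fun q : (Fin (K+1) → ℕ) × Bool × Bool => upd q.1 q.2.1 q.2.2)).comp
    (measurable_fst.prodMk (h1.prodMk h2))

theorem step_meas (τ : ℝ) (n m t : ℕ) :
    Measurable (fun p : S K × ℝ => step τ n m t p.1 p.2) := by
  have ha : Measurable (fun p : S K × ℝ => acc τ m t p.1 p.2) := by
    unfold acc; split_ifs <;> fun_prop
  unfold step
  split_ifs
  · exact ha
  · exact close_meas.comp ha
  · exact measurable_fst

end algo

section analysis

variable {K : ℕ}

noncomputable def sg (μ : Fin K → ℝ) (τ : ℝ) (k : Fin K) : ℝ := if τ ≤ μ k then 1 else -1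

theorem chernoff (ν : Measure ℝ) (mu τ σ Δ ε : ℝ) (hσ : 0 < σ) (hΔ : 0 ≤ Δ)
    (hε : ε * (mu - τ) = |mu - τ|) (hε2 : ε ^ 2 = 1) (hd : Δ ≤ |mu - τ|)
    (hs : IsSubGaussianArm (σ ^ 2) mu ν) :
    ∫⁻ y, ENNReal.ofReal (Real.exp (-(Δ/σ^2) * (ε * (y - τ)))) ∂ν
      ≤ ENNReal.ofReal (Real.exp (-(Δ^2 / (2 * σ^2)))) := by
  have e : ∀ y, ENNReal.ofReal (Real.exp (-(Δ/σ^2) * (ε * (y - τ))))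
      = ENNReal.ofReal (Real.exp (-(Δ/σ^2) * |mu - τ|)) *
        ENNReal.ofReal (Real.exp ((-(Δ/σ^2) * ε) * (y - mu))) := by
    intro y
    rw [← ENNReal.ofReal_mul (Real.exp_pos _).le, ← Real.exp_add, ← hε]
    congr 2; ring
  simp_rw [e]
  rw [lintegral_const_mul' _ _ ENNReal.ofReal_ne_top]
  refine (mul_le_mul_right (hs _) _).trans ?_
  rw [← ENNReal.ofReal_mul (Real.exp_pos _).le, ← Real.exp_add]
  refine ENNReal.ofReal_le_ofReal (Real.exp_le_exp.2 ?_)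
  have h1 : (-(Δ/σ^2) * ε)^2 = (Δ/σ^2)^2 := by rw [mul_pow, hε2]; ring
  rw [h1]
  have h2 : Δ/σ^2 * Δ ≤ Δ/σ^2 * |mu - τ| := mul_le_mul_of_nonneg_left hd (by positivity)
  have h3 : σ^2 * (Δ/σ^2)^2/2 = Δ^2/(2*σ^2) := by field_simp
  have h4 : Δ/σ^2 * Δ = 2 * (Δ^2/(2*σ^2)) := by field_simp
  linarith

theorem affine (ν : Measure ℝ) [IsProbabilityMeasure ν] (g : ℝ → ℝ) (hg : ∀ y, 0 ≤ g y)
    (q c1 c2 : ℝ) (hq : 0 ≤ q) (h1 : 0 ≤ c1) (h2 : 0 ≤ c2)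
    (h : ∫⁻ y, ENNReal.ofReal (g y) ∂ν ≤ ENNReal.ofReal q) :
    ∫⁻ y, ENNReal.ofReal (c1 + c2 * g y) ∂ν ≤ ENNReal.ofReal (c1 + c2 * q) := by
  have e : ∀ y, ENNReal.ofReal (c1 + c2 * g y)
      = ENNReal.ofReal c1 + ENNReal.ofReal c2 * ENNReal.ofReal (g y) := by
    intro y
    rw [ENNReal.ofReal_add h1 (mul_nonneg h2 (hg y)), ENNReal.ofReal_mul h2]
  simp_rw [e]
  rw [lintegral_add_left measurable_const, lintegral_const_mul' _ _ ENNReal.ofReal_ne_top,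
    ENNReal.ofReal_add h1 (mul_nonneg h2 hq), ENNReal.ofReal_mul h2]
  simp only [lintegral_const, measure_univ, mul_one]
  gcongr

/-- the in-phase potential -/
noncomputable def U (hK : 0 < K) (ε : Fin K → ℝ) (j0 : Fin (K+1)) (θ q s : ℝ) (n m : ℕ)
    (i r : ℕ) (x : S K) : ℝ :=
  (3 * (5/8 : ℝ)^s) ^ (n - i - 1) * ((5/8 : ℝ)^s * (pot j0 x.1)^s) *
    (1 + (q ^ m)⁻¹ * (q ^ (m - r) * Real.exp (-θ * (ε (armA hK x.1) * x.2.1))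
      + q ^ (m - (r - m)) * Real.exp (-θ * (ε (armB hK x.1) * x.2.2))))

noncomputable def V (hK : 0 < K) (ε : Fin K → ℝ) (j0 : Fin (K+1)) (θ q s : ℝ) (n m : ℕ)
    (t : ℕ) (x : S K) : ENNReal :=
  ENNReal.ofReal (if (clock m t).1 < n then U hK ε j0 θ q s n m (clock m t).1 (clock m t).2 x
    else (pot j0 x.1)^s)

theorem V_meas (hK : 0 < K) (ε : Fin K → ℝ) (j0 : Fin (K+1)) (θ q s : ℝ) (n m : ℕ) (t : ℕ) :
    Measurable (V hK ε j0 θ q s n m t) := by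
  have h1 : Measurable (fun x : S K => (pot j0 x.1)^s) :=
    (measurable_of_countable (fun v : Fin (K+1) → ℕ => (pot j0 v)^s)).comp measurable_fst
  have h2 : Measurable (fun x : S K => ε (armA hK x.1)) :=
    (measurable_of_countable (fun v : Fin (K+1) → ℕ => ε (armA hK v))).comp measurable_fst
  have h3 : Measurable (fun x : S K => ε (armB hK x.1)) :=
    (measurable_of_countable (fun v : Fin (K+1) → ℕ => ε (armB hK v))).comp measurable_fst
  unfold V
  refine ENNReal.measurable_ofReal.comp ?_
  split_ifs
  · unfold U
    fun_prop
  · exact h1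

theorem acc_int (hK : 0 < K) (τ θ q s : ℝ) (n m i t : ℕ) (j0 : Fin (K+1)) (ε : Fin K → ℝ)
    (ν : Fin K → Measure ℝ) [∀ k, IsProbabilityMeasure (ν k)] (hq : 0 < q)
    (hr : (clock m t).2 < 2 * m)
    (hc : ∀ k, ∫⁻ y, ENNReal.ofReal (Real.exp (-θ * (ε k * (y - τ)))) ∂(ν k) ≤ ENNReal.ofReal q)
    (x : S K) :
    ∫⁻ y, ENNReal.ofReal (U hK ε j0 θ q s n m i ((clock m t).2 + 1) (acc τ m t x y))
      ∂(ν (arm hK m t x)) ≤ ENNReal.ofReal (U hK ε j0 θ q s n m i (clock m t).2 x) := by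
  obtain ⟨v, a, b⟩ := x
  have hC : 0 ≤ (3 * (5/8 : ℝ)^s) ^ (n - i - 1) * ((5/8 : ℝ)^s * (pot j0 v)^s) := by
    have := Real.rpow_nonneg (pot_nonneg j0 v) s
    positivity
  by_cases h : (clock m t).2 < m
  · simp only [U, acc, arm, if_pos h]
    generalize (clock m t).2 = r at *
    generalize (3 * (5/8 : ℝ)^s) ^ (n - i - 1) * ((5/8 : ℝ)^s * (pot j0 v)^s) = C at *
    have e1 : r + 1 - m = 0 := by omega
    have e2 : r - m = 0 := by omega
    have e3 : m - r = m - (r + 1) + 1 := by omega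
    rw [e1, e2, e3, pow_succ]
    have := affine (ν (armA hK v)) (fun y => Real.exp (-θ * (ε (armA hK v) * (y - τ))))
      (fun y => (Real.exp_pos _).le) q
      (C * (1 + (q ^ m)⁻¹ * (q ^ (m - 0) * Real.exp (-θ * (ε (armB hK v) * b)))))
      (C * ((q ^ m)⁻¹ * (q ^ (m - (r+1)) * Real.exp (-θ * (ε (armA hK v) * a)))))
      hq.le (by positivity) (by positivity) (hc _)
    refine le_trans (le_of_eq ?_) (this.trans (le_of_eq ?_))
    · refine lintegral_congr fun y => ?_
      congr 1
      have : Real.exp (-θ * (ε (armA hK v) * (a + (y - τ)))) =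
        Real.exp (-θ * (ε (armA hK v) * a)) * Real.exp (-θ * (ε (armA hK v) * (y - τ))) := by
        rw [← Real.exp_add]; congr 1; ring
      rw [this]; ring
    · congr 1; ring
  · simp only [U, acc, arm, if_neg h]
    generalize (clock m t).2 = r at *
    generalize (3 * (5/8 : ℝ)^s) ^ (n - i - 1) * ((5/8 : ℝ)^s * (pot j0 v)^s) = C at *
    have e1 : m - (r + 1) = 0 := by omega
    have e2 : m - r = 0 := by omega
    have e3 : m - (r - m) = m - (r + 1 - m) + 1 := by omega
    rw [e1, e2, e3, pow_succ]
    have := affine (ν (armB hK v)) (fun y => Real.exp (-θ * (ε (armB hK v) * (y - τ))))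
      (fun y => (Real.exp_pos _).le) q
      (C * (1 + (q ^ m)⁻¹ * (q ^ 0 * Real.exp (-θ * (ε (armA hK v) * a)))))
      (C * ((q ^ m)⁻¹ * (q ^ (m - (r+1-m)) * Real.exp (-θ * (ε (armB hK v) * b)))))
      hq.le (by positivity) (by positivity) (hc _)
    refine le_trans (le_of_eq ?_) (this.trans (le_of_eq ?_))
    · refine lintegral_congr fun y => ?_
      congr 1
      have : Real.exp (-θ * (ε (armB hK v) * (b + (y - τ)))) =
        Real.exp (-θ * (ε (armB hK v) * b)) * Real.exp (-θ * (ε (armB hK v) * (y - τ))) := by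
        rw [← Real.exp_add]; congr 1; ring
      rw [this]; ring
    · congr 1; ring

theorem close_le (hK : 0 < K) (τ θ q s : ℝ) (n m i : ℕ) (j0 : Fin (K+1)) (μ : Fin K → ℝ)
    (hθ : 0 ≤ θ) (hq : 0 < q) (hs : 0 ≤ s) (hqs : (32/5 : ℝ) ^ s = (q ^ m)⁻¹)
    (hj0 : ∀ k : Fin K, τ ≤ μ k ↔ j0.val ≤ k.val) (x : S K) :
    (3 * (5/8 : ℝ)^s) ^ (n - i - 1) * (pot j0 (close x).1)^s
      ≤ U hK (sg μ τ) j0 θ q s n m i (2 * m) x := by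
  obtain ⟨v, a, b⟩ := x
  have e1 : m - 2 * m = 0 := by omega
  have e2 : m - (2 * m - m) = 0 := by omega
  simp only [U, close, e1, e2, pow_zero, one_mul]
  rw [mul_assoc]
  refine mul_le_mul_of_nonneg_left ?_ (by positivity)
  have hpn := pot_nonneg j0 v
  have hps := Real.rpow_nonneg hpn s
  have hEA := Real.exp_pos (-θ * (sg μ τ (armA hK v) * a))
  have hEB := Real.exp_pos (-θ * (sg μ τ (armB hK v) * b))
  have hq' : 0 < (q ^ m)⁻¹ := by positivity
  -- a wrong sign makes the exponential at least one
  have wrong : ∀ (k : Fin K) (z : ℝ), ¬ (0 ≤ z ↔ τ ≤ μ k) →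
      1 ≤ Real.exp (-θ * (sg μ τ k * z)) := by
    intro k z hz
    rw [Real.one_le_exp_iff]
    unfold sg
    split_ifs with h
    · have : z < 0 := by by_contra h'; exact hz ⟨fun _ => h, fun _ => not_lt.1 h'⟩
      nlinarith
    · have : 0 ≤ z := by
        by_contra h'; exact hz ⟨fun h2 => absurd h2 h', fun h2 => absurd h2 h⟩
      nlinarith
  by_cases hA : 0 ≤ a ↔ τ ≤ μ (armA hK v)
  · by_cases hB : 0 ≤ b ↔ τ ≤ μ (armB hK v)
    · -- correct phase
      have hr := pot_right j0 v (decide (0 ≤ a)) (decide (b < 0)) (by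
        intro h
        rw [decide_eq_true_iff, hA, hj0, Fin.lt_def]
        simp only [armA]; omega) (by
        intro h
        rw [decide_eq_true_iff, ← not_le, hB, hj0, Fin.lt_def]
        simp only [armB]; omega)
      have h2 := Real.rpow_le_rpow (pot_nonneg _ _) hr hs
      rw [Real.mul_rpow (by norm_num) hpn] at h2
      refine h2.trans (le_mul_of_one_le_right (by positivity) ?_)
      have : 0 ≤ (q ^ m)⁻¹ * (Real.exp (-θ * (sg μ τ (armA hK v) * a))
        + Real.exp (-θ * (sg μ τ (armB hK v) * b))) := by positivity
      linarith
    · have := wrong _ _ hB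
      have hr := pot_wrong j0 v (decide (0 ≤ a)) (decide (b < 0))
      have h2 := Real.rpow_le_rpow (pot_nonneg _ _) hr hs
      rw [Real.mul_rpow (by norm_num) hpn] at h2
      refine h2.trans ?_
      have h4 : (4 : ℝ)^s = (5/8 : ℝ)^s * (q ^ m)⁻¹ := by
        rw [← hqs, ← Real.mul_rpow (by norm_num) (by norm_num)]; norm_num
      rw [h4, mul_right_comm]
      refine mul_le_mul_of_nonneg_left ?_ (by positivity)
      nlinarith
  · have := wrong _ _ hA
    have hr := pot_wrong j0 v (decide (0 ≤ a)) (decide (b < 0))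
    have h2 := Real.rpow_le_rpow (pot_nonneg _ _) hr hs
    rw [Real.mul_rpow (by norm_num) hpn] at h2
    refine h2.trans ?_
    have h4 : (4 : ℝ)^s = (5/8 : ℝ)^s * (q ^ m)⁻¹ := by
      rw [← hqs, ← Real.mul_rpow (by norm_num) (by norm_num)]; norm_num
    rw [h4, mul_right_comm]
    refine mul_le_mul_of_nonneg_left ?_ (by positivity)
    nlinarith

theorem hstep (hK : 0 < K) (τ θ q s : ℝ) (n m : ℕ) (hm : 0 < m) (j0 : Fin (K+1)) (μ : Fin K → ℝ)
    (hθ : 0 ≤ θ) (hq : 0 < q) (hs : 0 ≤ s) (hqs : (32/5 : ℝ) ^ s = (q ^ m)⁻¹)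
    (hj0 : ∀ k : Fin K, τ ≤ μ k ↔ j0.val ≤ k.val)
    (ν : Fin K → Measure ℝ) [∀ k, IsProbabilityMeasure (ν k)]
    (hc : ∀ k, ∫⁻ y, ENNReal.ofReal (Real.exp (-θ * (sg μ τ k * (y - τ)))) ∂(ν k)
      ≤ ENNReal.ofReal q) (t : ℕ) (x : S K) :
    ∫⁻ y, V hK (sg μ τ) j0 θ q s n m (t+1) (step τ n m t x y) ∂(ν (arm hK m t x))
      ≤ V hK (sg μ τ) j0 θ q s n m t x := by
  have hr := (clock_spec m hm t).2
  by_cases hi : (clock m t).1 < n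
  · have hacc := acc_int hK τ θ q s n m (clock m t).1 t j0 (sg μ τ) ν hq hr hc x
    by_cases h2 : (clock m t).2 + 1 < 2 * m
    · simpa only [V, step, clock, if_pos hi, if_pos h2] using hacc
    · have h3 : (clock m t).2 + 1 = 2 * m := by omega
      simp only [V, step, clock, if_pos hi, if_neg h2]
      refine le_trans (lintegral_mono fun y => ?_) hacc
      refine ENNReal.ofReal_le_ofReal ?_
      rw [h3]
      refine le_trans (le_of_eq ?_) (close_le hK τ θ q s n m (clock m t).1 j0 μ hθ hq hs hqs hj0 _)
      split_ifs with h4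
      · have hne : q ^ m ≠ 0 := by positivity
        simp only [U, close]
        obtain ⟨d, hd⟩ : ∃ d, n - (clock m t).1 - 1 = d + 1 :=
          ⟨n - (clock m t).1 - 2, by omega⟩
        have hd2 : n - ((clock m t).1 + 1) - 1 = d := by omega
        rw [hd, hd2]
        simp only [Nat.sub_zero, Nat.zero_sub, mul_zero, Real.exp_zero, mul_one, pow_succ]
        field_simp
        ring
      · have : n - (clock m t).1 - 1 = 0 := by omega
        rw [this]; simp
  · have h5 : ¬ (clock m (t+1)).1 < n := by
      simp only [clock]; split_ifs <;> simp only <;> omega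
    simp only [V, step, if_neg hi, if_neg h5]
    simp

theorem exists_j0 (μ : Fin K → ℝ) (τ : ℝ) (hμ : Monotone μ) :
    ∃ j0 : Fin (K+1), ∀ k : Fin K, τ ≤ μ k ↔ j0.val ≤ k.val := by
  classical
  have hex : ∃ j : ℕ, ∀ k : Fin K, j ≤ k.val → τ ≤ μ k := ⟨K, fun k hk => by omega⟩
  have hle : Nat.find hex ≤ K := Nat.find_le (fun k hk => by omega)
  refine ⟨⟨Nat.find hex, by omega⟩, fun k => ⟨fun h => ?_, fun h => Nat.find_spec hex k h⟩⟩
  exact Nat.find_le (fun k' hk' => h.trans (hμ (Fin.le_def.2 hk')))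

theorem numerics (n m T : ℕ) (hK : 3 ≤ K) (hn : n = ⌈8 * Real.log K⌉₊) (hm : m = T / (2 * n))
    (hT : 36 * Real.log K < T) : 0 < n ∧ 0 < m ∧ n * (2 * m) ≤ T ∧
    ∀ lam s : ℝ, 0 ≤ lam → s = m * lam / 2 / Real.log (32/5) →
      (3 * (5/8 : ℝ)^s) ^ n * (K : ℝ) ^ s ≤ Real.exp (-(1/48 : ℝ) * T * lam + 12 * Real.log K) := by
  have hKr : (3 : ℝ) ≤ K := by exact_mod_cast hK
  have he := Real.exp_one_lt_d9
  have he' := Real.exp_one_gt_d9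
  have hlogK : 1 ≤ Real.log K := by
    rw [Real.le_log_iff_exp_le (by linarith)]; linarith
  have hn1 : 8 * Real.log K ≤ n := by rw [hn]; exact Nat.le_ceil _
  have hn2 : (n : ℝ) ≤ 9 * Real.log K := by
    have := Nat.ceil_lt_add_one (a := 8 * Real.log K) (by linarith)
    rw [← hn] at this; linarith
  have hn0 : 0 < n := by
    have : (0 : ℝ) < n := by linarith
    exact_mod_cast this
  have h2n : 2 * n ≤ T := by
    have : ((2 * n : ℕ) : ℝ) ≤ T := by push_cast; linarith
    exact_mod_cast this
  have hm0 : 0 < m := by rw [hm]; exact Nat.div_pos h2n (by omega)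
  have hle : 2 * n * m ≤ T := by rw [hm]; exact Nat.mul_div_le _ _
  have hlt : T ≤ 4 * n * m := by
    have h1 : T < 2 * n * (m + 1) := by rw [hm]; exact Nat.lt_mul_div_succ _ (by omega)
    have h2 : 2 * n * 1 ≤ 2 * n * m := Nat.mul_le_mul_left _ hm0
    calc T ≤ 2 * n * (m + 1) := h1.le
      _ = 2 * n * m + 2 * n * 1 := by ring
      _ ≤ 2 * n * m + 2 * n * m := by omega
      _ = 4 * n * m := by ring
  refine ⟨hn0, hm0, le_trans (le_of_eq (by ring)) hle, ?_⟩
  intro lam s hlam hs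
  have hlt' : (T : ℝ) ≤ 4 * n * m := by exact_mod_cast hlt
  have hl2 := Real.log_two_lt_d9
  have hl3 : Real.log 3 ≤ 4/3 := by
    have : 3 * Real.log 3 ≤ 4 := by
      have h27 : 3 * Real.log 3 = Real.log 27 := by
        rw [show (27 : ℝ) = 3 ^ 3 by norm_num, Real.log_pow]; norm_num
      rw [h27, Real.log_le_iff_le_exp (by norm_num)]
      have : Real.exp 4 = Real.exp 1 ^ 4 := by rw [← Real.exp_nat_mul]; norm_num
      rw [this]
      calc (27 : ℝ) ≤ 2.7 ^ 4 := by norm_num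
        _ ≤ _ := pow_le_pow_left₀ (by norm_num) (by linarith) 4
    linarith
  have hl85 : 9/20 ≤ Real.log (8/5) := by
    have : 9 ≤ 20 * Real.log (8/5) := by
      have h20 : 20 * Real.log (8/5) = Real.log ((8/5)^20) := by rw [Real.log_pow]; norm_num
      rw [h20, Real.le_log_iff_exp_le (by positivity)]
      have : Real.exp 9 = Real.exp 1 ^ 9 := by rw [← Real.exp_nat_mul]; norm_num
      rw [this]
      calc Real.exp 1 ^ 9 ≤ 2.72 ^ 9 := pow_le_pow_left₀ (Real.exp_pos _).le (by linarith) 9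
        _ ≤ _ := by norm_num
    linarith
  have hL : Real.log (32/5) = Real.log (8/5) + 2 * Real.log 2 := by
    rw [show (32/5 : ℝ) = 8/5 * 2^2 by norm_num, Real.log_mul (by norm_num) (by norm_num),
      Real.log_pow]; norm_num
  have hl58 : Real.log (5/8) = - Real.log (8/5) := by
    rw [← Real.log_inv]; norm_num
  have hLpos : 0 < Real.log (32/5) := Real.log_pos (by norm_num)
  have hs0 : 0 ≤ s := by rw [hs]; positivity
  have hsL : s * Real.log (32/5) = m * lam / 2 := by rw [hs]; field_simp
  have e3 : (3 * (5/8 : ℝ)^s) ^ n * (K : ℝ) ^ s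
      = Real.exp (n * (Real.log 3 + Real.log (5/8) * s) + Real.log K * s) := by
    rw [Real.rpow_def_of_pos (by norm_num), Real.rpow_def_of_pos (by linarith), Real.exp_add,
      Real.exp_nat_mul, Real.exp_add, Real.exp_log (by norm_num)]
  rw [e3, Real.exp_le_exp, hl58]
  have a1 : n * Real.log 3 ≤ 12 * Real.log K := by
    calc n * Real.log 3 ≤ n * (4/3) := mul_le_mul_of_nonneg_left hl3 (Nat.cast_nonneg _)
      _ ≤ _ := by linarith
  have a2 : n * (Real.log (32/5) / 6) ≤ n * Real.log (8/5) - Real.log K := by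
    have : (n : ℝ) * (Real.log (32/5) / 6) ≤ n * (Real.log (8/5) - 1/8) :=
      mul_le_mul_of_nonneg_left (by linarith) (Nat.cast_nonneg _)
    linarith
  have a3 := mul_le_mul_of_nonneg_left a2 hs0
  have a4 : s * (n * (Real.log (32/5) / 6)) = n * (m * lam / 2) / 6 := by rw [← hsL]; ring
  have a5 : (T : ℝ) * lam ≤ 4 * n * m * lam := mul_le_mul_of_nonneg_right hlt' hlam
  rw [a4] at a3
  linarith

end analysis

end MTB

open MTB in
/-- Problem dependent upper bound for the monotone thresholding bandit problem
(Theorem 2): for `T > 36 log K` there is a parameter free fixed-budget strategy (PD-MTB)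
whose probability of error on every sub-Gaussian bandit problem with nondecreasing means is
at most `exp(−(1/48)·T·Δ_min²/σ² + 12·log K)`. -/
theorem monotone_upper_bound
    (K T : ℕ) (hK : 3 ≤ K) (hT : 36 * Real.log K < T) (τ : ℝ) :
    ∃ (π : (t : ℕ) → (Fin t → ℝ) → Fin K) (Qhat : (Fin T → ℝ) → Fin K → Bool),
      (∀ t, Measurable (π t)) ∧ Measurable Qhat ∧
      ∀ (σ : ℝ), 0 < σ → ∀ (ν : Fin K → Measure ℝ) (μ : Fin K → ℝ),
        (∀ k, IsProbabilityMeasure (ν k)) →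
        (∀ k, ∫ x, x ∂ν k = μ k) →
        (∀ k, IsSubGaussianArm (σ ^ 2) (μ k) (ν k)) →
        Monotone μ →
        histMeasure ν π T (errSet Qhat μ τ) ≤
          ENNReal.ofReal (Real.exp (-(1 / 48 : ℝ) * T * (⨅ k, |μ k - τ|) ^ 2 / σ ^ 2
            + 12 * Real.log K)) := by
  have hK0 : 0 < K := by omega
  obtain ⟨n, hn⟩ : ∃ n, n = ⌈8 * Real.log K⌉₊ := ⟨_, rfl⟩
  obtain ⟨m, hm⟩ : ∃ m, m = T / (2 * n) := ⟨_, rfl⟩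
  obtain ⟨hn0, hm0, hnm, hfin⟩ := numerics n m T hK hn hm hT
  let s0 : S K := (fun _ => 0, 0, 0)
  have hsm := step_meas (K := K) τ n m
  have ham := arm_meas hK0 m
  refine ⟨fun t h => arm hK0 m t (st (step τ n m) s0 t h),
    fun h k => decide ((med (st (step τ n m) s0 T h).1).val ≤ k.val),
    fun t => (ham t).comp (st_meas _ _ hsm t), ?_, ?_⟩
  · exact (measurable_of_countable
      (fun v : Fin (K+1) → ℕ => fun k : Fin K => decide ((med v).val ≤ k.val))).comp
      (measurable_fst.comp (st_meas _ _ hsm T))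
  intro σ hσ ν μ hν hmean hsub hmono
  obtain ⟨j0, hj0⟩ := exists_j0 μ τ hmono
  set Δ := ⨅ k, |μ k - τ| with hΔ
  have hΔ0 : 0 ≤ Δ := Real.iInf_nonneg fun k => abs_nonneg _
  have hΔle : ∀ k, Δ ≤ |μ k - τ| := fun k => ciInf_le (Set.finite_range _).bddBelow k
  set q := Real.exp (-(Δ^2 / (2 * σ^2))) with hq
  have hq0 : 0 < q := Real.exp_pos _
  set θ := Δ / σ^2 with hθ
  have hθ0 : 0 ≤ θ := by positivity
  set s := m * (Δ^2/σ^2) / 2 / Real.log (32/5) with hs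
  have hlog : 0 < Real.log (32/5) := Real.log_pos (by norm_num)
  have hs0 : 0 ≤ s := by positivity
  have hqs : (32/5 : ℝ) ^ s = (q ^ m)⁻¹ := by
    rw [Real.rpow_def_of_pos (by norm_num), hq, ← Real.exp_nat_mul, ← Real.exp_neg]
    congr 1
    rw [hs]; field_simp
  have hc : ∀ k, ∫⁻ y, ENNReal.ofReal (Real.exp (-θ * (sg μ τ k * (y - τ)))) ∂(ν k)
      ≤ ENNReal.ofReal q := by
    intro k
    refine chernoff (ν k) (μ k) τ σ Δ _ hσ hΔ0 ?_ ?_ (hΔle k) (hsub k)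
    · unfold sg; split_ifs with h
      · rw [abs_of_nonneg (by linarith)]; ring
      · rw [abs_of_neg (by linarith)]; ring
    · unfold sg; split_ifs <;> norm_num
  have hsup := super ν (step τ n m) s0 (arm hK0 m) hsm ham (V hK0 (sg μ τ) j0 θ q s n m)
    (V_meas _ _ _ _ _ _ _ _) (hstep hK0 τ θ q s n m hm0 j0 μ hθ0 hq0 hs0 hqs hj0 ν hc) T
  have hT1 : ¬ (clock m T).1 < n := by
    intro h
    have := clock_spec m hm0 T
    have h2 : ((clock m T).1 + 1) * (2 * m) ≤ n * (2 * m) := Nat.mul_le_mul_right _ h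
    rw [Nat.add_mul] at h2
    omega
  have herr : errSet (fun (h : Fin T → ℝ) (k : Fin K) =>
      decide ((med (st (step τ n m) s0 T h).1).val ≤ k.val)) μ τ ⊆
      {h | 1 ≤ V hK0 (sg μ τ) j0 θ q s n m T (st (step τ n m) s0 T h)} := by
    rintro h ⟨k, hk⟩
    have hne : med (st (step τ n m) s0 T h).1 ≠ j0 := by
      intro he
      apply hk
      simp only [he, hj0 k, decide_eq_true_eq]
    simp only [Set.mem_ofPred_eq, V, if_neg hT1]
    rw [ENNReal.one_le_ofReal]
    exact Real.one_le_rpow (pot_err _ _ hne) hs0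
  refine (measure_mono herr).trans ?_
  have hmk := mul_meas_ge_le_lintegral (μ := histMeasure ν
    (fun t h => arm hK0 m t (st (step τ n m) s0 t h)) T)
    ((V_meas hK0 (sg μ τ) j0 θ q s n m T).comp (st_meas _ s0 hsm T)) 1
  rw [one_mul] at hmk
  refine hmk.trans (hsup.trans ?_)
  refine ENNReal.ofReal_le_ofReal ?_
  have hf := hfin (Δ^2/σ^2) s (by positivity) hs
  have e1 : -(1 / 48 : ℝ) * T * Δ ^ 2 / σ ^ 2 = -(1/48 : ℝ) * T * (Δ^2/σ^2) := by ring
  rw [e1]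
  refine le_trans (le_of_eq ?_) hf
  have hne : q ^ m ≠ 0 := by positivity
  obtain ⟨d, rfl⟩ : ∃ d, n = d + 1 := ⟨n - 1, by omega⟩
  simp only [clock, if_pos hn0, U, s0, pot_zero]
  simp only [Nat.sub_zero, Nat.zero_sub, mul_zero, Real.exp_zero, mul_one, pow_succ,
    Nat.add_sub_cancel]
  field_simp
  ring
end

section
/- Let K ≥ 3, T ≥ 1, σ > 0, τ ∈ ℝ, and let Δ ∈ ℝ^K with Δ_k > 0 for all k be such that there exists a concave real sequence (m_k)_{k=1}^K with |m_k − τ| = Δ_k for every k and with m_l ≥ τ for at least one l. Then for every fixed-budget strategy π with horizon T there exists a bandit problem ν whose arms are Gaussian measures on ℝ with variance σ², whose means (μ_k)_{k=1}^K form a concave sequence and satisfy Δ_k/10 ≤ |μ_k − τ| ≤ 3·Δ_k for every k ∈ [K], such that the probability of error satisfies e_T^{ν,π} ≥ (1/4)·exp(−9·T·Δ_min²/σ²), where Δ_min = min_{k∈[K]} Δ_k. -/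
open MeasureTheory ProbabilityTheory

/-- A finite sequence `(μ_k)_{k=1}^K` is concave if `μ_{k-1} + μ_{k+1} ≤ 2 μ_k`
for all `1 < k < K` (here stated with 0-based indices). -/
def ConcaveSeq {K : ℕ} (μ : Fin K → ℝ) : Prop :=
  ∀ (i : ℕ) (h : i + 2 < K),
    μ ⟨i, by omega⟩ + μ ⟨i + 2, h⟩ ≤ 2 * μ ⟨i + 1, by omega⟩

/-- Slope lemma: left of a sign change the sequence increases by at least `2δ` per step. -/
lemma clb_slope (K : ℕ) (M : ℕ → ℝ) (δ : ℝ)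
    (hc : ∀ i, i + 2 < K → M i + M (i + 2) ≤ 2 * M (i + 1))
    (hm : ∀ i, i < K → δ ≤ |M i|) (hδ : 0 < δ)
    (q l : ℕ) (hql : q < l) (hl : l < K) (hq : M q < 0) (hlp : 0 < M l) :
    ∀ d p, p + d = q → M p ≤ M q - 2 * δ * d := by
  have anti : ∀ d i, i + d + 1 < K → M (i + d + 1) - M (i + d) ≤ M (i + 1) - M i := by
    intro d
    induction d with
    | zero => intro i _; simp
    | succ d ih =>
      intro i hi
      have h1 := ih i (by omega)
      have h2 := hc (i + d) (by omega)
      have e : i + (d + 1) = i + d + 1 := by ring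
      rw [e]
      linarith
  have exi : ∃ i, q ≤ i ∧ i < l ∧ M i < 0 ∧ 0 < M (i + 1) := by
    by_contra hcon
    push Not at hcon
    have : ∀ d, q + d ≤ l → M (q + d) < 0 := by
      intro d
      induction d with
      | zero => intro _; simpa using hq
      | succ d ih =>
        intro hd
        have h1 := ih (by omega)
        have h2 := hcon (q + d) (by omega) (by omega) h1
        have h3 := hm (q + d + 1) (by omega)
        rw [abs_of_nonpos h2] at h3
        have e : q + (d + 1) = q + d + 1 := by ring
        rw [e]; linarith
    have h := this (l - q) (by omega)
    rw [show q + (l - q) = l by omega] at h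
    linarith
  obtain ⟨i, hqi, hil, hin, hip⟩ := exi
  have hs : 2 * δ ≤ M (i + 1) - M i := by
    have h1 := hm i (by omega)
    have h2 := hm (i + 1) (by omega)
    rw [abs_of_neg hin] at h1
    rw [abs_of_pos hip] at h2
    linarith
  intro d
  induction d with
  | zero => intro p hp; simp at hp; subst hp; simp
  | succ d ih =>
    intro p hp
    have h1 := ih (p + 1) (by omega)
    have h2 := anti (i - p) p (by omega)
    rw [show p + (i - p) = i by omega] at h2
    push_cast
    linarith

/-- Mirror image of `clb_slope`. -/
lemma clb_slope' (K : ℕ) (M : ℕ → ℝ) (δ : ℝ)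
    (hc : ∀ i, i + 2 < K → M i + M (i + 2) ≤ 2 * M (i + 1))
    (hm : ∀ i, i < K → δ ≤ |M i|) (hδ : 0 < δ)
    (q l : ℕ) (hql : l < q) (hqK : q < K) (hq : M q < 0) (hlp : 0 < M l) :
    ∀ d p, q + d = p → p < K → M p ≤ M q - 2 * δ * d := by
  intro d p hp hpK
  have h := clb_slope K (fun i => M (K - 1 - i)) δ
    (by
      intro i hi
      have h := hc (K - 1 - (i + 2)) (by omega)
      rw [show K - 1 - (i + 2) + 2 = K - 1 - i by omega,
        show K - 1 - (i + 2) + 1 = K - 1 - (i + 1) by omega] at h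
      simpa [add_comm] using h)
    (by intro i hi; exact hm _ (by omega)) hδ (K - 1 - q) (K - 1 - l) (by omega) (by omega)
    (by simpa [show K - 1 - (K - 1 - q) = q by omega] using hq)
    (by simpa [show K - 1 - (K - 1 - l) = l by omega] using hlp)
    d (K - 1 - p) (by omega)
  simpa [show K - 1 - (K - 1 - q) = q by omega, show K - 1 - (K - 1 - p) = p by omega] using h

/-- The pair of alternatives. -/
def ClbPair (K : ℕ) (M : ℕ → ℝ) (δ : ℝ) : Prop :=
  ∃ A B : ℕ → ℝ,
    (∀ i, i + 2 < K → A i + A (i + 2) ≤ 2 * A (i + 1)) ∧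
    (∀ i, i + 2 < K → B i + B (i + 2) ≤ 2 * B (i + 1)) ∧
    (∀ i, i < K → |M i| / 10 ≤ |A i| ∧ |A i| ≤ 3 * |M i|) ∧
    (∀ i, i < K → |M i| / 10 ≤ |B i| ∧ |B i| ≤ 3 * |M i|) ∧
    (∀ i, i < K → |A i - B i| ≤ 2 * δ) ∧ ∃ i, i < K ∧ A i < 0 ∧ 0 ≤ B i

lemma clb_gap (x g : ℝ) (δ : ℝ) (hδ : 0 < δ) (hx : δ ≤ |x|) (hg : 0 ≤ g)
    (h : g ≤ 0.9 * δ ∨ (x < 0 ∧ g ≤ 2 * (-x))) :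
    |x| / 10 ≤ |x - g| ∧ |x - g| ≤ 3 * |x| := by
  rcases le_total 0 x with h0 | h0
  · rw [abs_of_nonneg h0] at *
    rcases h with h | h
    · rw [abs_of_nonneg (by linarith)]; constructor <;> linarith
    · linarith [h.1]
  · rw [abs_of_nonpos h0] at *
    rw [abs_of_nonpos (by linarith)]
    rcases h with h | h
    · constructor <;> linarith
    · constructor <;> linarith [h.2]

/-- Tilting construction (case where the minimal-gap arm is above threshold). -/
lemma clb_tilt (K : ℕ) (M : ℕ → ℝ) (δ : ℝ)
    (hc : ∀ i, i + 2 < K → M i + M (i + 2) ≤ 2 * M (i + 1))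
    (hm : ∀ i, i < K → δ ≤ |M i|) (hδ : 0 < δ) (a : ℕ) (ha : a < K) (hMa : M a = δ)
    (e : ℝ) (he : e = 1 ∨ e = -1)
    (hside : ∀ k, k < K → e * ((k : ℝ) - a) < 0 →
      M k ≤ -(2 * (-(e * ((k : ℝ) - a))) - 1) * δ) : ClbPair K M δ := by
  have conc : ∀ c : ℝ, ∀ i, i + 2 < K →
      (M i - max (δ * (c - 0.2 * (e * ((i : ℝ) - a)))) 0) +
      (M (i + 2) - max (δ * (c - 0.2 * (e * (((i + 2 : ℕ) : ℝ) - a)))) 0) ≤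
      2 * (M (i + 1) - max (δ * (c - 0.2 * (e * (((i + 1 : ℕ) : ℝ) - a)))) 0) := by
    intro c i hi
    have h := hc i hi
    push_cast
    have h1 := le_max_left (δ * (c - 0.2 * (e * ((i : ℝ) - a)))) 0
    have h2 := le_max_right (δ * (c - 0.2 * (e * ((i : ℝ) - a)))) 0
    have h3 := le_max_left (δ * (c - 0.2 * (e * ((i : ℝ) + 2 - a)))) 0
    have h4 := le_max_right (δ * (c - 0.2 * (e * ((i : ℝ) + 2 - a)))) 0
    rcases max_cases (δ * (c - 0.2 * (e * ((i : ℝ) + 1 - a)))) 0 with ⟨h5, _⟩ | ⟨h5, _⟩ <;>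
      rw [h5] <;> linarith
  have key : ∀ k, k < K → k = a ∨ 1 ≤ e * ((k : ℝ) - a) ∨
      e * ((k : ℝ) - a) ≤ -1 := by
    intro k hk
    rcases lt_trichotomy k a with h | h | h
    · have : (k : ℝ) + 1 ≤ a := by exact_mod_cast h
      rcases he with rfl | rfl
      · right; right; linarith
      · right; left; linarith
    · left; exact h
    · have : (a : ℝ) + 1 ≤ k := by exact_mod_cast h
      rcases he with rfl | rfl
      · right; left; linarith
      · right; right; linarith
  have gap : ∀ c : ℝ, 0 ≤ c → c ≤ 1.1 → ∀ k, k < K → k ≠ a →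
      |M k| / 10 ≤ |M k - max (δ * (c - 0.2 * (e * ((k : ℝ) - a)))) 0| ∧
      |M k - max (δ * (c - 0.2 * (e * ((k : ℝ) - a)))) 0| ≤ 3 * |M k| := by
    intro c hc0 hc1 k hk hka
    refine clb_gap _ _ δ hδ (hm k hk) (le_max_right _ _) ?_
    rcases key k hk with h | h | h
    · exact absurd h hka
    · left
      refine max_le ?_ (by positivity)
      nlinarith
    · right
      have h1 := hside k hk (by linarith)
      set x := e * ((k : ℝ) - a)
      refine ⟨by nlinarith, max_le (by nlinarith) (by nlinarith)⟩
  refine ⟨fun k => M k - max (δ * (1.1 - 0.2 * (e * ((k : ℝ) - a)))) 0,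
    fun k => M k - max (δ * (0 - 0.2 * (e * ((k : ℝ) - a)))) 0, conc _, conc _, ?_, ?_, ?_, ?_⟩
  · intro k hk
    by_cases hka : k = a
    · subst hka
      simp only [sub_self, mul_zero, sub_zero, hMa]
      rw [max_eq_left (by positivity), abs_of_pos hδ, abs_of_neg (by linarith)]
      constructor <;> linarith
    · exact gap 1.1 (by norm_num) le_rfl k hk hka
  · intro k hk
    by_cases hka : k = a
    · subst hka
      simp only [sub_self, mul_zero, sub_zero, hMa, max_self]
      rw [abs_of_pos hδ]
      constructor <;> linarith
    · exact gap 0 le_rfl (by norm_num) k hk hka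
  · intro k hk
    simp only
    rw [abs_le]
    set x := e * ((k : ℝ) - a)
    rcases max_cases (δ * (1.1 - 0.2 * x)) 0 with ⟨h5, _⟩ | ⟨h5, _⟩ <;>
    rcases max_cases (δ * (0 - 0.2 * x)) 0 with ⟨h6, _⟩ | ⟨h6, _⟩ <;>
      rw [h5, h6] <;> constructor <;> linarith
  · refine ⟨a, ha, ?_, ?_⟩
    · simp only [sub_self, mul_zero, sub_zero, hMa]
      rw [max_eq_left (by positivity)]; linarith
    · simp only [sub_self, mul_zero, sub_zero, hMa, max_self]
      exact hδ.le

/-- Shift construction (case where the minimal-gap arm is below threshold). -/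
lemma clb_shift (K : ℕ) (M : ℕ → ℝ) (δ : ℝ)
    (hc : ∀ i, i + 2 < K → M i + M (i + 2) ≤ 2 * M (i + 1))
    (hm : ∀ i, i < K → δ ≤ |M i|) (hδ : 0 < δ) (a : ℕ) (ha : a < K) (hMa : M a = -δ)
    (l : ℕ) (hl : l < K) (hMl : 0 < M l) : ClbPair K M δ := by
  have two : ∀ p q, p < q → q < K → M p < 0 → M q < 0 → -3 * δ < M p → -3 * δ < M q →
      p < l ∧ l < q := by
    intro p q hpq hq hp0 hq0 hp3 hq3
    have hpl : p ≠ l := by rintro rfl; linarith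
    have hql : q ≠ l := by rintro rfl; linarith
    have hp1 := hm p (by omega)
    have hq1 := hm q hq
    rw [abs_of_neg hp0] at hp1
    rw [abs_of_neg hq0] at hq1
    have hd : (1 : ℝ) ≤ ((q - p : ℕ) : ℝ) := by
      have : 1 ≤ q - p := by omega
      exact_mod_cast this
    by_contra hcon
    by_cases h : q < l
    · have := clb_slope K M δ hc hm hδ q l h hl hq0 hMl (q - p) p (by omega)
      nlinarith
    · have h' : l < p := by omega
      have := clb_slope' K M δ hc hm hδ p l h' (by omega) hp0 hMl (q - p) q (by omega) hq
      nlinarith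
  have hcex : ∃ c, 1.1 * δ ≤ c ∧ c ≤ 2 * δ ∧ ∀ k, k < K → M k < 0 → -M k / 10 ≤ |M k + c| := by
    by_contra hcon
    push Not at hcon
    obtain ⟨k1, hk1, hn1, hb1⟩ := hcon (1.1 * δ) le_rfl (by linarith)
    obtain ⟨k2, hk2, hn2, hb2⟩ := hcon (2 * δ) (by linarith) le_rfl
    rw [abs_lt] at hb1 hb2
    have g1 : k1 ≠ k2 := by rintro rfl; linarith [hb1.1, hb2.2]
    have g2 : k1 ≠ a := by rintro rfl; linarith [hb1.1, hb1.2]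
    have g3 : k2 ≠ a := by rintro rfl; linarith [hb2.1, hb2.2]
    have T : ∀ p q, p ≠ q → p < K → q < K → M p < 0 → M q < 0 → -3 * δ < M p → -3 * δ < M q →
      (p < l ∧ l < q) ∨ (q < l ∧ l < p) := by
      intro p q hne hp hq h1 h2 h3 h4
      rcases lt_or_gt_of_ne hne with h | h
      · exact Or.inl (two p q h hq h1 h2 h3 h4)
      · exact Or.inr (two q p h hp h2 h1 h4 h3)
    have b1 : -3 * δ < M k1 := by linarith [hb1.1]
    have b2 : -3 * δ < M k2 := by linarith [hb2.1]
    have b3 : -3 * δ < M a := by linarith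
    have t1 := T k1 k2 g1 hk1 hk2 hn1 hn2 b1 b2
    have t2 := T k1 a g2 hk1 ha hn1 (by linarith) b1 b3
    have t3 := T k2 a g3 hk2 ha hn2 (by linarith) b2 b3
    omega
  obtain ⟨c, hc1, hc2, hck⟩ := hcex
  refine ⟨M, fun k => M k + c, hc, ?_, ?_, ?_, ?_, a, ha, by linarith, by linarith⟩
  · intro i hi
    have := hc i hi
    simp only; linarith
  · intro i hi
    have := abs_nonneg (M i)
    constructor <;> linarith
  · intro i hi
    have h1 := hm i hi
    rcases le_or_gt 0 (M i) with h | h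
    · simp only
      rw [abs_of_nonneg h] at *
      rw [abs_of_nonneg (by linarith)]
      constructor <;> linarith
    · have h2 := hck i hi h
      simp only
      rw [abs_of_neg h] at *
      refine ⟨h2, abs_le.2 ⟨by linarith, by linarith⟩⟩
  · intro i hi
    simp only
    rw [abs_le]; constructor <;> linarith

lemma clb_pair (K : ℕ) (M : ℕ → ℝ) (δ : ℝ)
    (hc : ∀ i, i + 2 < K → M i + M (i + 2) ≤ 2 * M (i + 1))
    (hm : ∀ i, i < K → δ ≤ |M i|) (hδ : 0 < δ)
    (hex : ∃ a, a < K ∧ |M a| = δ)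
    (l : ℕ) (hl : l < K) (hMl : 0 < M l) : ClbPair K M δ := by
  classical
  have ha := Nat.find_spec hex
  have hmin := fun k => @Nat.find_min _ _ hex k
  set a := Nat.find hex
  obtain ⟨haK, haδ⟩ := ha
  rcases (abs_eq hδ.le).1 haδ with hMa | hMa
  swap
  · exact clb_shift K M δ hc hm hδ a haK hMa l hl hMl
  have left : (∀ k, k < a → M k ≤ -(2 * ((a : ℝ) - k) - 1) * δ) → ClbPair K M δ := by
    intro h
    refine clb_tilt K M δ hc hm hδ a haK hMa 1 (Or.inl rfl) ?_
    intro k hk hk2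
    have hka : k < a := by
      have : (k : ℝ) < a := by linarith
      exact_mod_cast this
    have := h k hka
    rw [show -(1 * ((k : ℝ) - a)) = (a : ℝ) - k by ring]
    exact this
  have right : (∀ k, a < k → k < K → M k ≤ -(2 * ((k : ℝ) - a) - 1) * δ) → ClbPair K M δ := by
    intro h
    refine clb_tilt K M δ hc hm hδ a haK hMa (-1) (Or.inr rfl) ?_
    intro k hk hk2
    have hka : a < k := by
      have : (a : ℝ) < k := by linarith
      exact_mod_cast this
    have := h k hka hk
    rw [show -(-1 * ((k : ℝ) - a)) = (k : ℝ) - a by ring]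
    exact this
  rcases Nat.eq_zero_or_pos a with h0 | h0
  · exact left (fun k hk => by omega)
  by_cases hL : M (a - 1) < 0
  · apply left
    intro k hk
    have h := clb_slope K M δ hc hm hδ (a - 1) a (by omega) haK hL (by linarith) (a - 1 - k) k
      (by omega)
    have h1 := hm (a - 1) (by omega)
    rw [abs_of_neg hL] at h1
    have e : ((a - 1 - k : ℕ) : ℝ) = (a : ℝ) - 1 - k := by
      rw [Nat.cast_sub (by omega), Nat.cast_sub (by omega)]; simp
    rw [e] at h
    linarith
  push Not at hL
  have h1 := hm (a - 1) (by omega)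
  have h2 := hmin (a - 1) (by omega)
  rw [abs_of_nonneg hL] at h1 h2
  have h3 : δ < M (a - 1) := lt_of_le_of_ne h1 (fun h => h2 ⟨by omega, h.symm⟩)
  apply right
  intro k hk hkK
  have h4 := hc (a - 1) (by omega)
  rw [show a - 1 + 1 = a by omega, show a - 1 + 2 = a + 1 by omega] at h4
  have h5 := hm (a + 1) (by omega)
  have h6 : M (a + 1) < 0 := by
    by_contra hcon
    push Not at hcon
    rw [abs_of_nonneg hcon] at h5
    linarith
  rw [abs_of_neg h6] at h5
  have h := clb_slope' K M δ hc hm hδ (a + 1) a (by omega) (by omega) h6 (by linarith)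
    (k - (a + 1)) k (by omega) hkK
  rw [Nat.cast_sub (by omega)] at h
  push_cast at h
  linarith

/-- Single-step change of measure. -/
lemma clb_gauss (a b : ℝ) (v : NNReal) (hv : v ≠ 0) (D : ℝ) (hD : (b - a) ^ 2 / v ≤ D)
    (f : ℝ → ENNReal) (hf : Measurable f) :
    (∫⁻ x, f x ∂(gaussianReal b v)) ^ 2 ≤
      ENNReal.ofReal (Real.exp D) * ∫⁻ x, f x ^ 2 ∂(gaussianReal a v) := by
  have hv' : (0 : ℝ) < v := by positivity
  set r : ℝ → ENNReal := fun x => ENNReal.ofReal (Real.exp ((b - a) * (2 * x - a - b) / (2 * v)))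
    with hr
  have hrm : Measurable r := by fun_prop
  have e1 : ∀ x, gaussianPDF b v x = gaussianPDF a v x * r x := by
    intro x
    simp only [gaussianPDF, hr, gaussianPDFReal]
    rw [← ENNReal.ofReal_mul (by positivity), mul_assoc _ (Real.exp _), ← Real.exp_add]
    congr 3
    field_simp
    ring
  have e2 : ∀ x, gaussianPDF a v x * r x ^ 2 =
      ENNReal.ofReal (Real.exp ((b - a) ^ 2 / v)) * gaussianPDF (2 * b - a) v x := by
    intro x
    simp only [gaussianPDF, hr, gaussianPDFReal]
    rw [← ENNReal.ofReal_pow (by positivity), ← ENNReal.ofReal_mul (by positivity),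
      ← ENNReal.ofReal_mul (by positivity), mul_left_comm, mul_assoc, ← Real.exp_nat_mul,
      ← Real.exp_add, ← Real.exp_add]
    congr 3
    push_cast
    field_simp
    ring
  have i1 : ∫⁻ x, f x ∂(gaussianReal b v) = ∫⁻ x, (f * r) x ∂(gaussianReal a v) := by
    rw [gaussianReal_of_var_ne_zero _ hv, gaussianReal_of_var_ne_zero _ hv,
      lintegral_withDensity_eq_lintegral_mul _ (measurable_gaussianPDF _ _) hf,
      lintegral_withDensity_eq_lintegral_mul _ (measurable_gaussianPDF _ _) (hf.mul hrm)]
    refine lintegral_congr fun x => ?_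
    simp only [Pi.mul_apply, e1]
    ring
  have i2 : ∫⁻ x, r x ^ 2 ∂(gaussianReal a v) = ENNReal.ofReal (Real.exp ((b - a) ^ 2 / v)) := by
    rw [gaussianReal_of_var_ne_zero _ hv,
      lintegral_withDensity_eq_lintegral_mul _ (measurable_gaussianPDF _ _) (hrm.pow_const 2)]
    simp only [Pi.mul_apply, e2]
    rw [lintegral_const_mul _ (measurable_gaussianPDF _ _), lintegral_gaussianPDF_eq_one _ hv,
      mul_one]
  have hol := ENNReal.lintegral_mul_le_Lp_mul_Lq (gaussianReal a v)
    (Real.HolderConjugate.two_two) hf.aemeasurable hrm.aemeasurable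
  rw [i1]
  calc _ ≤ _ := pow_le_pow_left' hol 2
    _ = (∫⁻ x, f x ^ 2 ∂(gaussianReal a v)) * ∫⁻ x, r x ^ 2 ∂(gaussianReal a v) := by
      rw [mul_pow, ← ENNReal.rpow_mul_natCast, ← ENNReal.rpow_mul_natCast]
      norm_num
    _ ≤ _ := by
      rw [i2, mul_comm]
      gcongr

lemma clb_meas_snoc (n : ℕ) :
    Measurable (fun q : (Fin n → ℝ) × ℝ => (Fin.snoc q.1 q.2 : Fin (n + 1) → ℝ)) := by
  refine measurable_pi_lambda _ fun i => ?_
  refine Fin.lastCases ?_ (fun j => ?_) i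
  · simpa using measurable_snd
  · simp only [Fin.snoc_castSucc]
    exact (measurable_pi_apply j).comp measurable_fst

lemma clb_meas_snoc' (n : ℕ) (h : Fin n → ℝ) :
    Measurable (fun y : ℝ => (Fin.snoc h y : Fin (n + 1) → ℝ)) :=
  (clb_meas_snoc n).comp measurable_prodMk_left

lemma clb_meas_kernel {K : ℕ} (ν : Fin K → Measure ℝ) [∀ k, IsProbabilityMeasure (ν k)] (n : ℕ)
    (p : (Fin n → ℝ) → Fin K) (hp : Measurable p) :
    Measurable (fun h : Fin n → ℝ =>
      (ν (p h)).map (fun y => (Fin.snoc h y : Fin (n + 1) → ℝ))) := by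
  have h1 : Measurable (fun q : (Fin n → ℝ) × Fin K =>
      (ν q.2).map (fun y => (Fin.snoc q.1 y : Fin (n + 1) → ℝ))) := by
    refine measurable_from_prod_countable_left fun k => ?_
    refine Measure.measurable_of_measurable_coe _ fun s hs => ?_
    have : ∀ h : Fin n → ℝ, ((ν k).map (fun y => (Fin.snoc h y : Fin (n + 1) → ℝ))) s =
        ν k (Prod.mk h ⁻¹' ((fun q : (Fin n → ℝ) × ℝ =>
          (Fin.snoc q.1 q.2 : Fin (n + 1) → ℝ)) ⁻¹' s)) := by
      intro h
      rw [Measure.map_apply (clb_meas_snoc' n h) hs]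
      rfl
    simp only [this]
    exact measurable_measure_prodMk_left (clb_meas_snoc n hs)
  exact h1.comp (measurable_id.prodMk hp)

lemma clb_lintegral_succ {K : ℕ} (ν : Fin K → Measure ℝ) [∀ k, IsProbabilityMeasure (ν k)]
    (π : (t : ℕ) → (Fin t → ℝ) → Fin K) (hπ : ∀ t, Measurable (π t)) (n : ℕ)
    (f : (Fin (n + 1) → ℝ) → ENNReal) (hf : Measurable f) :
    ∫⁻ y, f y ∂(histMeasure ν π (n + 1)) =
      ∫⁻ h, ∫⁻ y, f (Fin.snoc h y) ∂(ν (π n h)) ∂(histMeasure ν π n) := by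
  rw [histMeasure, Measure.lintegral_bind (clb_meas_kernel ν n (π n) (hπ n)).aemeasurable
    hf.aemeasurable]
  refine lintegral_congr fun h => ?_
  rw [lintegral_map hf (clb_meas_snoc' n h)]

lemma clb_meas_inner {K : ℕ} (ν : Fin K → Measure ℝ) [∀ k, IsProbabilityMeasure (ν k)] (n : ℕ)
    (p : (Fin n → ℝ) → Fin K) (hp : Measurable p)
    (f : (Fin (n + 1) → ℝ) → ENNReal) (hf : Measurable f) :
    Measurable (fun h : Fin n → ℝ => ∫⁻ y, f (Fin.snoc h y) ∂(ν (p h))) := by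
  have h := (Measure.measurable_lintegral hf).comp (clb_meas_kernel ν n p hp)
  refine (congrArg Measurable (funext fun x => ?_)).mp h
  simp only [Function.comp]
  rw [lintegral_map hf (clb_meas_snoc' n x)]

lemma clb_univ {K : ℕ} (ν : Fin K → Measure ℝ) [∀ k, IsProbabilityMeasure (ν k)]
    (π : (t : ℕ) → (Fin t → ℝ) → Fin K) (hπ : ∀ t, Measurable (π t)) (n : ℕ) :
    histMeasure ν π n Set.univ = 1 := by
  induction n with
  | zero => simp [histMeasure]
  | succ n ih =>
    have h := clb_lintegral_succ ν π hπ n (fun _ => 1) measurable_const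
    simpa [ih] using h

/-- Change of measure for the whole history. -/
lemma clb_change {K : ℕ} (a b : Fin K → ℝ) (v : NNReal) (hv : v ≠ 0) (D : ℝ)
    (hD : ∀ k, (b k - a k) ^ 2 / v ≤ D)
    (π : (t : ℕ) → (Fin t → ℝ) → Fin K) (hπ : ∀ t, Measurable (π t)) (n : ℕ) :
    ∀ f : (Fin n → ℝ) → ENNReal, Measurable f →
    (∫⁻ y, f y ∂(histMeasure (fun k => gaussianReal (b k) v) π n)) ^ 2 ≤
      ENNReal.ofReal (Real.exp D) ^ n *
        ∫⁻ y, f y ^ 2 ∂(histMeasure (fun k => gaussianReal (a k) v) π n) := by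
  induction n with
  | zero =>
    intro f hf
    simp only [histMeasure, pow_zero, one_mul]
    rw [lintegral_dirac' _ hf, lintegral_dirac' _ (hf.pow_const 2)]
  | succ n ih =>
    intro f hf
    rw [clb_lintegral_succ _ π hπ n f hf, clb_lintegral_succ _ π hπ n _ (hf.pow_const 2)]
    refine (ih _ (clb_meas_inner (fun k => gaussianReal (b k) v) n (π n) (hπ n) f hf)).trans ?_
    rw [pow_succ, mul_assoc]
    refine mul_le_mul_right ?_ _
    rw [← lintegral_const_mul _ (clb_meas_inner (fun k => gaussianReal (a k) v) n (π n) (hπ n) _ (hf.pow_const 2))]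
    refine lintegral_mono fun h => ?_
    exact clb_gauss _ _ v hv D (hD _) _ (hf.comp (clb_meas_snoc' n h))

/-- Problem dependent lower bound for the concave thresholding bandit problem
(Theorem 3, fixed-budget setting): for any strategy there is a Gaussian bandit problem with
concave means whose gaps satisfy `Δ_k/10 ≤ |μ_k − τ| ≤ 3 Δ_k` on which the probability of
error is at least `(1/4) · exp(−9·T·Δ_min²/σ²)`. -/
theorem concave_lower_bound
    (K T : ℕ) (hK : 3 ≤ K) (hT : 1 ≤ T) (σ τ : ℝ) (hσ : 0 < σ)
    (Δ : Fin K → ℝ) (hΔ : ∀ k, 0 < Δ k)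
    (hfeas : ∃ m : Fin K → ℝ, ConcaveSeq m ∧ (∀ k, |m k - τ| = Δ k) ∧ ∃ l, τ ≤ m l)
    (π : (t : ℕ) → (Fin t → ℝ) → Fin K) (hπ : ∀ t, Measurable (π t))
    (Qhat : (Fin T → ℝ) → Fin K → Bool) (hQhat : Measurable Qhat) :
    ∃ μ : Fin K → ℝ, ConcaveSeq μ ∧
      (∀ k, Δ k / 10 ≤ |μ k - τ| ∧ |μ k - τ| ≤ 3 * Δ k) ∧
      ENNReal.ofReal ((1 / 4) * Real.exp (-9 * (T : ℝ) * (⨅ k, Δ k) ^ 2 / σ ^ 2)) ≤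
        histMeasure (fun k => gaussianReal (μ k) ⟨σ ^ 2, sq_nonneg σ⟩) π T
          (errSet Qhat μ τ) := by
  obtain ⟨m, hmc, hmΔ, l, hl⟩ := hfeas
  have : Nonempty (Fin K) := ⟨⟨0, by omega⟩⟩
  obtain ⟨i0, hi0⟩ := Finite.exists_min Δ
  have hinf : (⨅ k, Δ k) = Δ i0 :=
    le_antisymm (ciInf_le (Set.finite_range Δ).bddBelow i0) (le_ciInf hi0)
  rw [hinf]
  set δ := Δ i0 with hδdef
  have hδ : 0 < δ := hΔ i0
  set M : ℕ → ℝ := fun i => if h : i < K then m ⟨i, h⟩ - τ else 0 with hMdef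
  have hM : ∀ k : Fin K, M k = m k - τ := by
    intro k; simp [hMdef]
  have hM' : ∀ i (h : i < K), M i = m ⟨i, h⟩ - τ := by
    intro i h; simp [hMdef, h]
  have hMa : ∀ i (h : i < K), |M i| = Δ ⟨i, h⟩ := by
    intro i h; rw [hM' i h, hmΔ]
  have hpair : ClbPair K M δ := by
    refine clb_pair K M δ ?_ ?_ hδ ⟨i0, i0.2, hMa i0 i0.2⟩ l l.2 ?_
    · intro i hi
      have := hmc i hi
      rw [hM' i (by omega), hM' (i + 1) (by omega), hM' (i + 2) hi]
      linarith
    · intro i hi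
      rw [hMa i hi]; exact hi0 _
    · rw [hM]
      have h1 := hΔ l
      rw [← hmΔ l, abs_pos] at h1
      exact lt_of_le_of_ne (by linarith) (Ne.symm h1)
  obtain ⟨A, B, hA, hB, hAg, hBg, hAB, j, hj, hAj, hBj⟩ := hpair
  set v : NNReal := ⟨σ ^ 2, sq_nonneg σ⟩ with hvdef
  have hv : v ≠ 0 := by
    intro h
    have := congrArg NNReal.toReal h
    have h2 : σ ^ 2 = 0 := this
    have h3 : 0 < σ ^ 2 := by positivity
    exact absurd h2 h3.ne'
  have hvr : (v : ℝ) = σ ^ 2 := rfl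
  have conc : ∀ F : ℕ → ℝ, (∀ i, i + 2 < K → F i + F (i + 2) ≤ 2 * F (i + 1)) →
      ConcaveSeq (fun k : Fin K => F k + τ) := by
    intro F hF i hi
    have := hF i hi
    simp only
    linarith
  have gaps : ∀ F : ℕ → ℝ, (∀ i, i < K → |M i| / 10 ≤ |F i| ∧ |F i| ≤ 3 * |M i|) →
      ∀ k : Fin K, Δ k / 10 ≤ |(F k + τ) - τ| ∧ |(F k + τ) - τ| ≤ 3 * Δ k := by
    intro F hF k
    have := hF k k.2
    rw [hMa k k.2] at this
    simpa using this
  have measE : ∀ μ : Fin K → ℝ, MeasurableSet (errSet Qhat μ τ) := by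
    intro μ
    have : errSet Qhat μ τ = Qhat ⁻¹' {q | ∃ k, (q k = true) ≠ (τ ≤ μ k)} := rfl
    rw [this]
    exact hQhat (Set.toFinite _).measurableSet
  set E := errSet Qhat (fun k : Fin K => A k + τ) τ with hE
  have hsub : Eᶜ ⊆ errSet Qhat (fun k : Fin K => B k + τ) τ := by
    intro y hy
    simp only [hE, errSet, Set.mem_compl_iff, Set.mem_setOf_eq, not_exists, not_not] at hy
    have h := hy ⟨j, hj⟩
    refine ⟨⟨j, hj⟩, ?_⟩
    rw [h]
    intro h2
    have h3 : τ ≤ B j + τ := by linarith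
    have h4 : τ ≤ A j + τ := by
      simp only at h2
      rw [h2]; exact h3
    linarith
  set Q := histMeasure (fun k : Fin K => gaussianReal (B k + τ) v) π T with hQ
  set P := histMeasure (fun k : Fin K => gaussianReal (A k + τ) v) π T with hP
  have hexp1 : Real.exp (-9 * (T : ℝ) * δ ^ 2 / σ ^ 2) ≤ 1 := by
    rw [Real.exp_le_one_iff]
    have : 0 ≤ 9 * (T : ℝ) * δ ^ 2 / σ ^ 2 := by positivity
    have e : -9 * (T : ℝ) * δ ^ 2 / σ ^ 2 = -(9 * (T : ℝ) * δ ^ 2 / σ ^ 2) := by ring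
    linarith
  have hQu : Q Set.univ = 1 := clb_univ _ π hπ T
  by_cases hcase : ENNReal.ofReal (1 / 2) ≤ Q Eᶜ
  · refine ⟨fun k => B k + τ, conc B hB, gaps B hBg, ?_⟩
    refine le_trans ?_ (hcase.trans (measure_mono hsub))
    apply ENNReal.ofReal_le_ofReal
    linarith
  · refine ⟨fun k => A k + τ, conc A hA, gaps A hAg, ?_⟩
    push Not at hcase
    have hQE : ENNReal.ofReal (1 / 2) ≤ Q E := by
      by_contra hcon
      push Not at hcon
      have h1 := measure_add_measure_compl (μ := Q) (measE (fun k : Fin K => A k + τ))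
      rw [hQu] at h1
      have h2 := ENNReal.add_lt_add hcon hcase
      rw [← ENNReal.ofReal_add (by norm_num) (by norm_num)] at h2
      norm_num at h2
      exact absurd h1 h2.ne
    have hch := clb_change (fun k : Fin K => A k + τ) (fun k : Fin K => B k + τ) v hv
      (4 * δ ^ 2 / σ ^ 2) (by
        intro k
        have h1 := abs_le.1 (hAB k k.2)
        rw [hvr]
        gcongr
        nlinarith [h1.1, h1.2]) π hπ T (E.indicator 1)
        (measurable_one.indicator (measE _))
    have hind : ∀ y, (E.indicator (1 : (Fin T → ℝ) → ENNReal) y) ^ 2 = E.indicator 1 y := by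
      intro y
      by_cases hy : y ∈ E <;> simp [hy]
    simp only [hind] at hch
    rw [lintegral_indicator_one (measE _), lintegral_indicator_one (measE _)] at hch
    have h3 : ENNReal.ofReal (1 / 4) ≤
        ENNReal.ofReal (Real.exp (4 * δ ^ 2 / σ ^ 2)) ^ T * P E := by
      refine le_trans ?_ hch
      refine le_trans ?_ (pow_le_pow_left' hQE 2)
      rw [← ENNReal.ofReal_pow (by norm_num)]
      norm_num
    rw [← ENNReal.ofReal_pow (by positivity), ← Real.exp_nat_mul] at h3
    have h4 := mul_le_mul_right h3 (ENNReal.ofReal (Real.exp (-9 * (T : ℝ) * δ ^ 2 / σ ^ 2)))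
    rw [← ENNReal.ofReal_mul (by positivity), ← mul_assoc, ← ENNReal.ofReal_mul (by positivity),
      mul_comm _ (1 / 4 : ℝ), ← Real.exp_add] at h4
    refine h4.trans ?_
    have h5 : Real.exp (-9 * (T : ℝ) * δ ^ 2 / σ ^ 2 + T * (4 * δ ^ 2 / σ ^ 2)) ≤ 1 := by
      rw [Real.exp_le_one_iff]
      have : 0 ≤ 5 * (T : ℝ) * δ ^ 2 / σ ^ 2 := by positivity
      have e : -9 * (T : ℝ) * δ ^ 2 / σ ^ 2 + T * (4 * δ ^ 2 / σ ^ 2) =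
        -(5 * (T : ℝ) * δ ^ 2 / σ ^ 2) := by ring
      linarith
    calc _ ≤ ENNReal.ofReal 1 * P E := by gcongr
      _ = P E := by simp
end

section
/- For every integer K ≥ 3 and every integer T with T > 108·log(K) there exists a fixed-budget strategy π with horizon T (the PD-CTB algorithm, which uses no knowledge of σ or of the gaps) such that for every σ > 0 and every σ²-sub-Gaussian K-armed bandit problem ν whose means (μ_k)_{k=1}^K form a concave sequence, the probability of error satisfies e_T^{ν,π} ≤ 3·exp(−(1/576)·T·Δ_min²/σ² + 12·log(K)), where Δ_min = min_{k∈[K]} |μ_k − τ|. -/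
open MeasureTheory

namespace CTB

open Finset

/-- extend a finite history by zero -/
def ext {t : ℕ} (h : Fin t → ℝ) : ℕ → ℝ := fun i => if hi : i < t then h ⟨i, hi⟩ else 0

lemma measurable_ext {t : ℕ} : Measurable (ext (t := t)) := by
  refine measurable_pi_iff.2 fun i => ?_
  unfold ext
  by_cases hi : i < t
  · simp only [hi, dif_pos]; exact measurable_pi_apply _
  · simp only [hi, dif_neg, not_false_iff]; exact measurable_const

lemma ext_snoc_lt {t : ℕ} (h : Fin t → ℝ) (v : ℝ) (i : ℕ) (hi : i < t) :
    ext (Fin.snoc h v : Fin (t + 1) → ℝ) i = ext h i := by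
  have h1 : i < t + 1 := by omega
  simp [ext, hi, h1, Fin.snoc]

lemma ext_snoc_self {t : ℕ} (h : Fin t → ℝ) (v : ℝ) :
    ext (Fin.snoc h v : Fin (t + 1) → ℝ) t = v := by
  simp [ext, Fin.snoc]

lemma measurable_snoc2 {t : ℕ} :
    Measurable (fun p : (Fin t → ℝ) × ℝ => (Fin.snoc p.1 p.2 : Fin (t + 1) → ℝ)) := by
  refine measurable_pi_iff.2 fun i => ?_
  refine Fin.lastCases ?_ (fun j => ?_) i
  · simp only [Fin.snoc_last]; exact measurable_snd
  · simp only [Fin.snoc_castSucc]; exact (measurable_pi_apply j).comp measurable_fst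

lemma measurable_snoc1 {t : ℕ} (h : Fin t → ℝ) :
    Measurable (fun v : ℝ => (Fin.snoc h v : Fin (t + 1) → ℝ)) :=
  measurable_snoc2.comp measurable_prodMk_left

lemma measurable_kern {K t : ℕ} (ν : Fin K → Measure ℝ) (hν : ∀ k, IsProbabilityMeasure (ν k))
    (p : (Fin t → ℝ) → Fin K) (hp : Measurable p) :
    Measurable (fun h : Fin t → ℝ =>
      (ν (p h)).map (Fin.snoc (α := fun _ => ℝ) h)) := by
  refine Measure.measurable_of_measurable_coe _ fun s hs => ?_
  have h1 : ∀ h : Fin t → ℝ, (ν (p h)).map (Fin.snoc (α := fun _ => ℝ) h) s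
      = (fun q : Fin K × (Fin t → ℝ) =>
          ν q.1 (Prod.mk q.2 ⁻¹' ((fun p : (Fin t → ℝ) × ℝ =>
            (Fin.snoc p.1 p.2 : Fin (t + 1) → ℝ)) ⁻¹' s))) (p h, h) := by
    intro h
    rw [Measure.map_apply (measurable_snoc1 h) hs]
    rfl
  have h2 : Measurable (fun q : Fin K × (Fin t → ℝ) =>
          ν q.1 (Prod.mk q.2 ⁻¹' ((fun p : (Fin t → ℝ) × ℝ =>
            (Fin.snoc p.1 p.2 : Fin (t + 1) → ℝ)) ⁻¹' s))) := by
    refine measurable_from_prod_countable_right fun k => ?_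
    exact measurable_measure_prodMk_left (ν := ν k) (measurable_snoc2 hs)
  have h3 := h2.comp (hp.prodMk measurable_id)
  have h4 : (fun h : Fin t → ℝ => (ν (p h)).map (Fin.snoc (α := fun _ => ℝ) h) s) = _ := funext h1
  rw [h4]
  exact h3

lemma expo_le {K : ℕ} (ν : Fin K → Measure ℝ) (hν : ∀ k, IsProbabilityMeasure (ν k))
    (μ : Fin K → ℝ) (σ : ℝ) (hs : ∀ k, IsSubGaussianArm (σ ^ 2) (μ k) (ν k))
    (a : ℕ → (ℕ → ℝ) → Fin K) (ha : ∀ t, Measurable (a t))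
    (hap : ∀ t y y', (∀ i < t, y i = y' i) → a t y = a t y')
    (c : ℕ → (ℕ → ℝ) → ℝ) (hc : ∀ t, Measurable (c t))
    (hcp : ∀ t y y', (∀ i < t, y i = y' i) → c t y = c t y') (n : ℕ) :
    ∫⁻ h, ENNReal.ofReal (Real.exp (∑ t ∈ range n, (c t (ext h) *
      (ext h t - μ (a t (ext h))) - σ ^ 2 * (c t (ext h)) ^ 2 / 2)))
      ∂histMeasure ν (fun t h => a t (ext h)) n ≤ 1 := by
  induction n with
  | zero => simp [histMeasure]
  | succ n ih =>
    have hμ : Measurable μ := measurable_of_finite μ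
    have hmeas : ∀ n : ℕ, Measurable (fun h : Fin n → ℝ =>
        ∑ t ∈ range n, (c t (ext h) *
        (ext h t - μ (a t (ext h))) - σ ^ 2 * (c t (ext h)) ^ 2 / 2)) := by
      intro n
      refine Finset.measurable_sum _ fun t _ => ?_
      have h1 : Measurable (fun h : Fin n → ℝ => c t (ext h)) := (hc t).comp measurable_ext
      have h2 : Measurable (fun h : Fin n → ℝ => ext h t) :=
        (measurable_pi_apply t).comp measurable_ext
      have h3 : Measurable (fun h : Fin n → ℝ => μ (a t (ext h))) :=
        hμ.comp ((ha t).comp measurable_ext)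
      exact (h1.mul (h2.sub h3)).sub (((h1.pow_const 2).const_mul _).div_const 2)
    have hE : Measurable (fun h : Fin (n + 1) → ℝ =>
        ENNReal.ofReal (Real.exp (∑ t ∈ range (n + 1), (c t (ext h) *
        (ext h t - μ (a t (ext h))) - σ ^ 2 * (c t (ext h)) ^ 2 / 2)))) :=
      (Real.measurable_exp.comp (hmeas (n + 1))).ennreal_ofReal
    rw [histMeasure, Measure.lintegral_bind
      (measurable_kern ν hν (fun h => a n (ext h)) ((ha n).comp measurable_ext)).aemeasurable hE.aemeasurable]
    refine le_trans (lintegral_mono fun h => ?_) ih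
    rw [lintegral_map hE
      (measurable_snoc1 h)]
    set k := a n (ext h) with hk
    set C := c n (ext h) with hC
    have key : ∀ v : ℝ, ENNReal.ofReal (Real.exp (∑ t ∈ range (n + 1),
        (c t (ext (Fin.snoc h v : Fin (n + 1) → ℝ)) *
        (ext (Fin.snoc h v : Fin (n + 1) → ℝ) t - μ (a t (ext (Fin.snoc h v : Fin (n + 1) → ℝ))))
         - σ ^ 2 * (c t (ext (Fin.snoc h v : Fin (n + 1) → ℝ))) ^ 2 / 2)))
        = ENNReal.ofReal (Real.exp (∑ t ∈ range n, (c t (ext h) *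
      (ext h t - μ (a t (ext h))) - σ ^ 2 * (c t (ext h)) ^ 2 / 2))) *
        ENNReal.ofReal (Real.exp (- (σ ^ 2 * C ^ 2 / 2))) *
        ENNReal.ofReal (Real.exp (C * (v - μ k))) := by
      intro v
      rw [← ENNReal.ofReal_mul (Real.exp_pos _).le, ← ENNReal.ofReal_mul (by positivity),
        ← Real.exp_add, ← Real.exp_add]
      congr 2
      rw [sum_range_succ, ext_snoc_self, hcp n _ (ext h) (fun i hi => ext_snoc_lt h v i hi),
        hap n _ (ext h) (fun i hi => ext_snoc_lt h v i hi)]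
      rw [add_assoc]
      congr 1
      · refine sum_congr rfl fun t ht => ?_
        have ht := mem_range.1 ht
        rw [ext_snoc_lt h v t ht,
          hcp t _ (ext h) (fun i hi => ext_snoc_lt h v i (hi.trans ht)),
          hap t _ (ext h) (fun i hi => ext_snoc_lt h v i (hi.trans ht))]
      · rw [← hk, ← hC]; ring
    simp_rw [key]
    rw [lintegral_const_mul _ (by fun_prop)]
    have h2 := hs k C
    calc _ ≤ ENNReal.ofReal (Real.exp (∑ t ∈ range n, (c t (ext h) *
      (ext h t - μ (a t (ext h))) - σ ^ 2 * (c t (ext h)) ^ 2 / 2))) *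
        ENNReal.ofReal (Real.exp (- (σ ^ 2 * C ^ 2 / 2))) *
          ENNReal.ofReal (Real.exp (σ ^ 2 * C ^ 2 / 2)) := by gcongr
      _ = _ := by
        rw [mul_assoc, ← ENNReal.ofReal_mul (Real.exp_pos _).le, ← Real.exp_add]
        simp

lemma markov_le {K : ℕ} (ν : Fin K → Measure ℝ) (hν : ∀ k, IsProbabilityMeasure (ν k))
    (μ : Fin K → ℝ) (σ : ℝ) (hs : ∀ k, IsSubGaussianArm (σ ^ 2) (μ k) (ν k))
    (a : ℕ → (ℕ → ℝ) → Fin K) (ha : ∀ t, Measurable (a t))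
    (hap : ∀ t y y', (∀ i < t, y i = y' i) → a t y = a t y')
    (c : ℕ → (ℕ → ℝ) → ℝ) (hc : ∀ t, Measurable (c t))
    (hcp : ∀ t y y', (∀ i < t, y i = y' i) → c t y = c t y') (n : ℕ) (M : ℝ) :
    histMeasure ν (fun t h => a t (ext h)) n
      {h | M ≤ ∑ t ∈ range n, (c t (ext h) *
      (ext h t - μ (a t (ext h))) - σ ^ 2 * (c t (ext h)) ^ 2 / 2)} ≤
      ENNReal.ofReal (Real.exp (-M)) := by
  have h1 := expo_le ν hν μ σ hs a ha hap c hc hcp n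
  set P := histMeasure ν (fun t h => a t (ext h)) n
  set f : (Fin n → ℝ) → ℝ := fun h => ∑ t ∈ range n, (c t (ext h) *
      (ext h t - μ (a t (ext h))) - σ ^ 2 * (c t (ext h)) ^ 2 / 2) with hf
  have h2 : ENNReal.ofReal (Real.exp M) * P {h | M ≤ f h} ≤ 1 := by
    refine le_trans ?_ h1
    refine le_trans ?_ (lintegral_mono (f := Set.indicator {h | M ≤ f h}
      (fun _ => ENNReal.ofReal (Real.exp M))) ?_)
    · have hμ : Measurable μ := measurable_of_finite μ
      have hm : Measurable f := by
        refine Finset.measurable_sum _ fun t _ => ?_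
        have h1 : Measurable (fun h : Fin n → ℝ => c t (ext h)) := (hc t).comp measurable_ext
        have h2 : Measurable (fun h : Fin n → ℝ => ext h t) :=
          (measurable_pi_apply t).comp measurable_ext
        have h3 : Measurable (fun h : Fin n → ℝ => μ (a t (ext h))) :=
          hμ.comp ((ha t).comp measurable_ext)
        exact (h1.mul (h2.sub h3)).sub (((h1.pow_const 2).const_mul _).div_const 2)
      rw [lintegral_indicator_const (measurableSet_le measurable_const hm)]
    · intro h
      by_cases hh : M ≤ f h
      · rw [Set.indicator_of_mem (by exact hh)]
        exact ENNReal.ofReal_le_ofReal (Real.exp_le_exp.2 hh)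
      · rw [Set.indicator_of_notMem (by exact hh)]
        exact zero_le
  calc P {h | M ≤ f h} = ENNReal.ofReal (Real.exp (-M)) *
        (ENNReal.ofReal (Real.exp M) * P {h | M ≤ f h}) := by
        rw [← mul_assoc, ← ENNReal.ofReal_mul (Real.exp_pos _).le, ← Real.exp_add]; simp
    _ ≤ ENNReal.ofReal (Real.exp (-M)) * 1 := by gcongr
    _ = _ := mul_one _

/-- drop the first `a` observations -/
def shift (a : ℕ) (y : ℕ → ℝ) : ℕ → ℝ := fun t => y (a + t)

lemma measurable_shift (a : ℕ) : Measurable (shift a) :=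
  measurable_pi_iff.2 fun _ => measurable_pi_apply _

/-- state of a search: number of contradictions and number of votes of each arm -/
abbrev St (K : ℕ) := (Fin K → ℕ) × (Fin K → ℕ)

/-- distance between naturals -/
def dst (i j : ℕ) : ℕ := (i - j) + (j - i)

/-- weight of an arm -/
noncomputable def wt {K : ℕ} (S : St K) (j : Fin K) : ℝ := (1 / 4 : ℝ) ^ (S.1 j)

lemma wt_pos {K : ℕ} (S : St K) (j : Fin K) : 0 < wt S j := by unfold wt; positivity

lemma exists_med {K : ℕ} (w : Fin K → ℝ) (hw : ∀ j, 0 ≤ w j) (f : Fin K → ℕ) (B : ℕ)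
    (hf : ∀ j, f j < B) (hB : 0 < B) :
    ∃ v < B, (∑ j, w j) / 2 ≤ ∑ j with f j ≤ v, w j ∧
      (∑ j, w j) / 2 ≤ ∑ j with v ≤ f j, w j := by
  have hW : 0 ≤ ∑ j, w j := sum_nonneg fun j _ => hw j
  have hex : ∃ v, (∑ j, w j) / 2 ≤ ∑ j with f j ≤ v, w j := by
    refine ⟨B - 1, ?_⟩
    rw [filter_true_of_mem (fun j _ => by have := hf j; omega)]
    linarith
  classical
  refine ⟨Nat.find hex, ?_, Nat.find_spec hex, ?_⟩
  · refine lt_of_le_of_lt (Nat.find_min' hex (m := B - 1) ?_) (by omega)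
    rw [filter_true_of_mem (fun j _ => by have := hf j; omega)]
    linarith
  · set v := Nat.find hex with hv
    have hsplit := sum_filter_add_sum_filter_not univ (fun j => v ≤ f j) w
    have hlt : ∑ j with ¬ v ≤ f j, w j ≤ (∑ j, w j) / 2 := by
      by_cases h0 : v = 0
      · rw [filter_false_of_mem (fun j _ => by omega)]
        simp; linarith
      · have := Nat.find_min hex (m := v - 1) (by omega)
        rw [not_le] at this
        refine le_trans (le_of_eq ?_) this.le
        refine sum_congr (filter_congr fun j _ => ?_) fun _ _ => rfl
        omega
    linarith

lemma exists_q {K : ℕ} [NeZero K] (S : St K) : ∃ q : Fin K × ℕ,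
    ((∑ j, wt S j) / 2 ≤ ∑ j : Fin K with j.val ≤ q.1.val, wt S j ∧
      (∑ j, wt S j) / 2 ≤ ∑ j : Fin K with q.1.val ≤ j.val, wt S j) ∧
    ((∑ j, wt S j) / 2 ≤ ∑ j : Fin K with dst j.val q.1 ≤ q.2, wt S j ∧
      (∑ j, wt S j) / 2 ≤ ∑ j : Fin K with q.2 ≤ dst j.val q.1, wt S j) := by
  have hK : 0 < K := Nat.pos_of_ne_zero (NeZero.ne K)
  obtain ⟨x, hx, h1⟩ := exists_med (wt S) (fun j => (wt_pos S j).le) (fun j => (j : ℕ)) K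
    (fun j => j.2) hK
  obtain ⟨s, -, h2⟩ := exists_med (wt S) (fun j => (wt_pos S j).le) (fun j => dst j x) K
    (fun j => by have := j.2; unfold dst; omega) hK
  exact ⟨(⟨x, hx⟩, s), h1, h2⟩

/-- query arm -/
noncomputable def qx {K : ℕ} [NeZero K] (S : St K) : Fin K := (Classical.choose (exists_q S)).1

/-- query radius -/
noncomputable def qs {K : ℕ} [NeZero K] (S : St K) : ℕ := (Classical.choose (exists_q S)).2

lemma q_spec {K : ℕ} [NeZero K] (S : St K) :
    ((∑ j, wt S j) / 2 ≤ ∑ j : Fin K with j.val ≤ (qx S).val, wt S j ∧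
      (∑ j, wt S j) / 2 ≤ ∑ j : Fin K with (qx S).val ≤ j.val, wt S j) ∧
    ((∑ j, wt S j) / 2 ≤ ∑ j : Fin K with dst j.val (qx S) ≤ qs S, wt S j ∧
      (∑ j, wt S j) / 2 ≤ ∑ j : Fin K with qs S ≤ dst j.val (qx S), wt S j) :=
  Classical.choose_spec (exists_q S)

/-- possible outcomes of a round -/
inductive Resp
  | F | A | B | C | D

/-- the set of arms contradicted by an outcome -/
def kset (x s : ℕ) : Resp → ℕ → Prop
  | .F, _ => False
  | .A, j => j ≤ x
  | .B, j => x ≤ j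
  | .C, j => s ≤ dst j x
  | .D, j => dst j x ≤ s

/-- outcome from the four test results -/
def resp (b1 b2 bR bL : Bool) : Resp :=
  if b1 then (if b2 then .A else .F)
  else if bR then (if bL then .C else .A) else (if bL then .B else .D)

open Classical in
/-- update of the state -/
noncomputable def upd {K : ℕ} [NeZero K] (S : St K) (r : Resp) : St K :=
  (fun j => S.1 j + if kset (qx S) (qs S) r j then 1 else 0,
   fun j => S.2 j + if r = .F ∧ j = qx S then 1 else 0)

open Classical in
/-- is `x` above the threshold (empirically) -/
noncomputable def t1 (n : ℕ) (τ : ℝ) (y : ℕ → ℝ) : Bool :=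
  decide (τ ≤ (∑ p ∈ range (2 * n), y p) / (2 * n))

open Classical in
/-- is `x + 1` above the threshold (empirically) -/
noncomputable def t2 {K : ℕ} [NeZero K] (n : ℕ) (τ : ℝ) (S : St K) (y : ℕ → ℝ) : Bool :=
  decide ((qx S : ℕ) + 1 < K ∧ τ ≤ (∑ p ∈ range (2 * n), y (2 * n + p)) / (2 * n))

open Classical in
/-- extrapolation test to the right -/
noncomputable def tR {K : ℕ} [NeZero K] (n : ℕ) (τ : ℝ) (S : St K) (y : ℕ → ℝ) : Bool :=
  decide ((qx S : ℕ) < qs S ∨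
    τ ≤ (∑ p ∈ range (2 * n), y p) / n - (∑ p ∈ range n, y (2 * n + p)) / n)

open Classical in
/-- extrapolation test to the left -/
noncomputable def tL {K : ℕ} [NeZero K] (n : ℕ) (τ : ℝ) (S : St K) (y : ℕ → ℝ) : Bool :=
  decide (K ≤ (qx S : ℕ) + qs S ∨
    τ ≤ (∑ p ∈ range (2 * n), y p) / n - (∑ p ∈ range n, y (3 * n + p)) / n)

/-- one round -/
noncomputable def stp {K : ℕ} [NeZero K] (n : ℕ) (τ : ℝ) (S : St K) (y : ℕ → ℝ) : St K :=
  upd S (resp (t1 n τ y) (t2 n τ S y) (tR n τ S y) (tL n τ S y))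

/-- state after `r` rounds -/
noncomputable def Sr {K : ℕ} [NeZero K] (n : ℕ) (τ : ℝ) : ℕ → (ℕ → ℝ) → St K
  | 0, _ => (fun _ => 0, fun _ => 0)
  | r + 1, y => stp n τ (Sr n τ r y) (shift (4 * n * r) y)

/-- arm with index `v`, default `x` -/
def clamp {K : ℕ} (x : Fin K) (v : ℕ) : Fin K := if h : v < K then ⟨v, h⟩ else x

/-- arm sampled at position `p` in a round -/
noncomputable def barm {K : ℕ} [NeZero K] (n : ℕ) (τ : ℝ) (S : St K) (y : ℕ → ℝ) (p : ℕ) :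
    Fin K :=
  if p < 2 * n then qx S else
    if t1 n τ y then clamp (qx S) (qx S + 1) else
      if p < 3 * n then clamp (qx S) (qx S - qs S) else clamp (qx S) (qx S + qs S)

/-- arm sampled at time `t` -/
noncomputable def arm {K : ℕ} [NeZero K] (n : ℕ) (τ : ℝ) (t : ℕ) (y : ℕ → ℝ) : Fin K :=
  barm n τ (Sr n τ (t / (4 * n)) y) (shift (4 * n * (t / (4 * n))) y) (t % (4 * n))

section
variable {K : ℕ} [NeZero K] (n : ℕ) (τ : ℝ)

lemma t1_congr (y y' : ℕ → ℝ) (h : ∀ i < 2 * n, y i = y' i) : t1 n τ y = t1 n τ y' := by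
  unfold t1
  rw [sum_congr rfl fun p hp => h p (mem_range.1 hp)]

lemma stp_congr (S : St K) (y y' : ℕ → ℝ) (h : ∀ i < 4 * n, y i = y' i) :
    stp n τ S y = stp n τ S y' := by
  have e1 : ∑ p ∈ range (2 * n), y p = ∑ p ∈ range (2 * n), y' p :=
    sum_congr rfl fun p hp => h p (by have := mem_range.1 hp; omega)
  have e2 : ∑ p ∈ range (2 * n), y (2 * n + p) = ∑ p ∈ range (2 * n), y' (2 * n + p) :=
    sum_congr rfl fun p hp => h _ (by have := mem_range.1 hp; omega)
  have e3 : ∑ p ∈ range n, y (2 * n + p) = ∑ p ∈ range n, y' (2 * n + p) :=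
    sum_congr rfl fun p hp => h _ (by have := mem_range.1 hp; omega)
  have e4 : ∑ p ∈ range n, y (3 * n + p) = ∑ p ∈ range n, y' (3 * n + p) :=
    sum_congr rfl fun p hp => h _ (by have := mem_range.1 hp; omega)
  simp only [stp, t1, t2, tR, tL, e1, e2, e3, e4]

lemma Sr_congr (r : ℕ) (y y' : ℕ → ℝ) (h : ∀ i < 4 * n * r, y i = y' i) :
    (Sr n τ r y : St K) = Sr n τ r y' := by
  induction r with
  | zero => rfl
  | succ r ih =>
    simp only [Sr]
    rw [ih (fun i hi => h i (by rw [mul_add]; omega))]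
    refine stp_congr n τ _ _ _ fun i hi => h _ ?_
    rw [mul_add]; omega

lemma arm_congr (t : ℕ) (y y' : ℕ → ℝ) (h : ∀ i < t, y i = y' i) :
    (arm n τ t y : Fin K) = arm n τ t y' := by
  have hd := Nat.div_add_mod t (4 * n)
  unfold arm
  rw [Sr_congr n τ _ y y' (fun i hi => h i (by omega))]
  unfold barm
  by_cases hp : t % (4 * n) < 2 * n
  · simp [hp]
  · rw [t1_congr n τ (shift (4 * n * (t / (4 * n))) y) (shift (4 * n * (t / (4 * n))) y')]
    intro i hi
    exact h _ (by omega)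

lemma measurable_dec {α : Type*} [MeasurableSpace α] {p : α → Prop} [∀ a, Decidable (p a)]
    (hp : MeasurableSet {a | p a}) : Measurable (fun a => decide (p a)) := by
  refine measurable_to_bool ?_
  convert hp using 1
  ext a
  simp

lemma measurable_t1 : Measurable (t1 n τ) := by
  unfold t1
  refine measurable_dec (α := ℕ → ℝ) ?_
  exact measurableSet_le measurable_const
    ((Finset.measurable_sum _ fun p _ => measurable_pi_apply p).div_const _)

lemma measurable_t2 (S : St K) : Measurable (t2 n τ S) := by
  unfold t2
  refine measurable_dec (MeasurableSet.inter (s₁ := {_y : ℕ → ℝ | (qx S : ℕ) + 1 < K}) (s₂ := {y : ℕ → ℝ | τ ≤ (∑ p ∈ range (2 * n), y (2 * n + p)) / (2 * n)})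
    (MeasurableSet.const _) ?_)
  exact measurableSet_le measurable_const
    ((Finset.measurable_sum _ fun p _ => measurable_pi_apply (2 * n + p)).div_const _)

lemma measurable_tR (S : St K) : Measurable (tR n τ S) := by
  unfold tR
  refine measurable_dec (MeasurableSet.union (s₁ := {_y : ℕ → ℝ | (qx S : ℕ) < qs S})
    (s₂ := {y : ℕ → ℝ | τ ≤ (∑ p ∈ range (2 * n), y p) / n - (∑ p ∈ range n, y (2 * n + p)) / n})
    (MeasurableSet.const _) ?_)
  exact measurableSet_le measurable_const
    (((Finset.measurable_sum _ fun p _ => measurable_pi_apply p).div_const _).sub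
    ((Finset.measurable_sum _ fun p _ => measurable_pi_apply (2 * n + p)).div_const _))

lemma measurable_tL (S : St K) : Measurable (tL n τ S) := by
  unfold tL
  refine measurable_dec (MeasurableSet.union (s₁ := {_y : ℕ → ℝ | K ≤ (qx S : ℕ) + qs S})
    (s₂ := {y : ℕ → ℝ | τ ≤ (∑ p ∈ range (2 * n), y p) / n - (∑ p ∈ range n, y (3 * n + p)) / n})
    (MeasurableSet.const _) ?_)
  exact measurableSet_le measurable_const
    (((Finset.measurable_sum _ fun p _ => measurable_pi_apply p).div_const _).sub
    ((Finset.measurable_sum _ fun p _ => measurable_pi_apply (3 * n + p)).div_const _))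

lemma measurable_stp (S : St K) : Measurable (stp n τ S) := by
  have h : Measurable (fun y => (t1 n τ y, t2 n τ S y, tR n τ S y, tL n τ S y)) :=
    (measurable_t1 n τ).prodMk ((measurable_t2 n τ S).prodMk
      ((measurable_tR n τ S).prodMk (measurable_tL n τ S)))
  have h2 : Measurable (fun b : Bool × Bool × Bool × Bool =>
      upd S (resp b.1 b.2.1 b.2.2.1 b.2.2.2)) := measurable_of_countable _
  exact h2.comp h

lemma measurable_Sr (r : ℕ) : Measurable (Sr n τ r : (ℕ → ℝ) → St K) := by
  induction r with
  | zero => exact measurable_const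
  | succ r ih =>
    have h1 : Measurable (fun q : St K × (ℕ → ℝ) => stp n τ q.1 q.2) :=
      measurable_from_prod_countable_right fun S => measurable_stp n τ S
    exact h1.comp (ih.prodMk (measurable_shift _))

lemma measurable_barm (S : St K) (p : ℕ) : Measurable (fun y => barm n τ S y p) := by
  unfold barm
  by_cases hp : p < 2 * n
  · simp only [hp, if_true]; exact measurable_const
  · simp only [hp, if_false]
    exact Measurable.ite (measurable_t1 n τ (measurableSet_singleton true))
      measurable_const measurable_const

lemma measurable_barm2 (p r o : ℕ) :
    Measurable (fun y => (barm n τ (Sr n τ r y) (shift o y) p : Fin K)) := by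
  have h1 : Measurable (fun q : St K × (ℕ → ℝ) => barm n τ q.1 q.2 p) :=
    measurable_from_prod_countable_right (f := fun q : St K × (ℕ → ℝ) => barm n τ q.1 q.2 p)
      fun S => measurable_barm n τ S p
  have h2 : Measurable (fun y => ((Sr n τ r y : St K), shift o y)) :=
    (measurable_Sr n τ r).prodMk (measurable_shift o)
  have h3 := h1.comp h2
  simpa only [Function.comp_def] using h3

lemma measurable_arm (t : ℕ) : Measurable (arm n τ t : (ℕ → ℝ) → Fin K) :=
  measurable_barm2 n τ (t % (4 * n)) (t / (4 * n)) (4 * n * (t / (4 * n)))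

end

/-- a round is bad if one of the relevant deviations is large -/
def bad {K : ℕ} [NeZero K] (n : ℕ) (τ : ℝ) (co : Fin 4 → Fin K → ℕ → ℝ) (μ : Fin K → ℝ) (Δ : ℝ)
    (S : St K) (y : ℕ → ℝ) : Prop :=
  ∃ e : Fin 4, e ≠ 0 ∧ Δ ≤ ∑ p ∈ range (4 * n), co e (qx S) p * (y p - μ (barm n τ S y p))

open Classical in
/-- number of bad rounds -/
noncomputable def nbad {K : ℕ} [NeZero K] (n : ℕ) (τ : ℝ) (co : Fin 4 → Fin K → ℕ → ℝ)
    (μ : Fin K → ℝ) (Δ : ℝ) (N : ℕ) (y : ℕ → ℝ) : ℕ :=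
  #{r ∈ range N | bad n τ co μ Δ (Sr n τ r y) (shift (4 * n * r) y)}

lemma sum_blocks (g : ℕ → ℝ) (o L N T : ℕ) (hT : o + L * N ≤ T)
    (h0 : ∀ t, t < o ∨ o + L * N ≤ t → g t = 0) :
    ∑ t ∈ range T, g t = ∑ r ∈ range N, ∑ p ∈ range L, g (o + (L * r + p)) := by
  have h1 : ∀ N, ∑ r ∈ range N, ∑ p ∈ range L, g (o + (L * r + p))
      = ∑ t ∈ range (L * N), g (o + t) := by
    intro N
    induction N with
    | zero => simp
    | succ N ih => rw [sum_range_succ, ih, mul_add, mul_one, sum_range_add]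
  rw [h1]
  obtain ⟨d, rfl⟩ := Nat.exists_eq_add_of_le hT
  rw [sum_range_add, sum_range_add]
  rw [sum_eq_zero (s := range o) fun t ht => h0 t (Or.inl (mem_range.1 ht)),
    sum_eq_zero (s := range d) fun t _ => h0 _ (Or.inr (by omega))]
  simp

lemma measurable_coef {K : ℕ} [NeZero K] (n : ℕ) (τ : ℝ) (r o : ℕ) (f : Fin K → ℝ) :
    Measurable (fun y => f (qx (Sr n τ r (shift o y) : St K))) := by
  have h1 : Measurable (fun S : St K => f (qx S)) := measurable_of_countable _
  have h2 := h1.comp ((measurable_Sr n τ r).comp (measurable_shift o))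
  simpa only [Function.comp_def] using h2

lemma search_prob {K : ℕ} [NeZero K] (n : ℕ) (hn : 0 < n) (τ : ℝ)
    (ν : Fin K → Measure ℝ) (hν : ∀ k, IsProbabilityMeasure (ν k))
    (μ : Fin K → ℝ) (σ : ℝ) (hσ : 0 < σ) (hs : ∀ k, IsSubGaussianArm (σ ^ 2) (μ k) (ν k))
    (a : ℕ → (ℕ → ℝ) → Fin K) (ha : ∀ t, Measurable (a t))
    (hap : ∀ t y y', (∀ i < t, y i = y' i) → a t y = a t y')
    (o T N m : ℕ) (φ : Fin K → Fin K) (hT : o + 4 * n * N ≤ T)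
    (haφ : ∀ t y, t < 4 * n * N → a (o + t) y = φ (arm n τ t (shift o y)))
    (co : Fin 4 → Fin K → ℕ → ℝ) (hco0 : ∀ x p, co 0 x p = 0)
    (hco2 : ∀ e x, ∑ p ∈ range (4 * n), (co e x p) ^ 2 ≤ 3 / n)
    (Δ : ℝ) (hΔ : 0 ≤ Δ) :
    histMeasure ν (fun t h => a t (ext h)) T
      {h | m ≤ nbad n τ co (μ ∘ φ) Δ N (shift o (ext h))} ≤
      4 ^ N * ENNReal.ofReal (Real.exp (-(m * (n * Δ ^ 2 / (6 * σ ^ 2))))) := by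
  classical
  have hn' : (0 : ℝ) < n := by exact_mod_cast hn
  set lam : ℝ := n * Δ / (3 * σ ^ 2) with hlam
  have hlam0 : 0 ≤ lam := by positivity
  set G : ℝ := n * Δ ^ 2 / (6 * σ ^ 2) with hG
  have hG0 : 0 ≤ G := by positivity
  -- the coefficients
  let E : (Fin N → Fin 4) → ℕ → Fin 4 := fun e r => if h : r < N then e ⟨r, h⟩ else 0
  let c : (Fin N → Fin 4) → ℕ → (ℕ → ℝ) → ℝ := fun e t y =>
    if o ≤ t ∧ t < o + 4 * n * N then
      lam * co (E e ((t - o) / (4 * n))) (qx (Sr n τ ((t - o) / (4 * n)) (shift o y) : St K))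
        ((t - o) % (4 * n)) else 0
  have hcm : ∀ e t, Measurable (c e t) := by
    intro e t
    by_cases ht : o ≤ t ∧ t < o + 4 * n * N
    · simp only [c, ht, and_self, if_true]
      exact measurable_coef n τ ((t - o) / (4 * n)) o
        (fun x => lam * co (E e ((t - o) / (4 * n))) x ((t - o) % (4 * n)))
    · simp only [c, ht, if_false]; exact measurable_const
  have hcp : ∀ e t y y', (∀ i < t, y i = y' i) → c e t y = c e t y' := by
    intro e t y y' h
    by_cases ht : o ≤ t ∧ t < o + 4 * n * N
    · simp only [c, ht, and_self, if_true]
      rw [Sr_congr n τ _ (shift o y) (shift o y')]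
      intro i hi
      refine h _ ?_
      have := Nat.mul_div_le (t - o) (4 * n)
      omega
    · simp only [c, ht, if_false]
  have hmk := fun e => markov_le ν hν μ σ hs a ha hap (c e) (hcm e) (hcp e) T (m * G)
  have hpt : ∀ y : ℕ → ℝ, m ≤ nbad n τ co (μ ∘ φ) Δ N (shift o y) →
      ∃ e : Fin N → Fin 4, m * G ≤ ∑ t ∈ range T, (c e t y *
      (y t - μ (a t y)) - σ ^ 2 * (c e t y) ^ 2 / 2) := by
    intro y hh
    let B : ℕ → Prop := fun r => bad n τ co (μ ∘ φ) Δ (Sr n τ r (shift o y))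
      (shift (4 * n * r) (shift o y))
    have hB : ∀ r, ∃ e : Fin 4, (B r → Δ ≤ ∑ p ∈ range (4 * n),
        co e (qx (Sr n τ r (shift o y) : St K)) p * (shift (4 * n * r) (shift o y) p -
        (μ ∘ φ) (barm n τ (Sr n τ r (shift o y)) (shift (4 * n * r) (shift o y)) p)))
        ∧ (¬ B r → e = 0) := by
      intro r
      by_cases hb : B r
      · obtain ⟨e, he0, he⟩ := hb
        exact ⟨e, fun _ => he, fun h => absurd ⟨e, he0, he⟩ h⟩
      · exact ⟨0, fun h => absurd h hb, fun _ => rfl⟩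
    choose e he using hB
    refine ⟨fun r => e r, ?_⟩
    rw [sum_blocks _ o (4 * n) N T hT]
    swap
    · intro t ht
      have : ¬ (o ≤ t ∧ t < o + 4 * n * N) := by omega
      simp [c, this]
    have hround : ∀ r ∈ range N, (if B r then G else 0) ≤ ∑ p ∈ range (4 * n),
        (c (fun r => e r) (o + (4 * n * r + p)) y *
        (y (o + (4 * n * r + p)) - μ (a (o + (4 * n * r + p)) y)) -
          σ ^ 2 * (c (fun r => e r) (o + (4 * n * r + p)) y) ^ 2 / 2) := by
      intro r hr
      have hr := mem_range.1 hr
      set x := qx (Sr n τ r (shift o y) : St K) with hx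
      have hterm : ∀ p ∈ range (4 * n), (c (fun r => e r) (o + (4 * n * r + p)) y *
          (y (o + (4 * n * r + p)) - μ (a (o + (4 * n * r + p)) y)) -
          σ ^ 2 * (c (fun r => e r) (o + (4 * n * r + p)) y) ^ 2 / 2) =
          lam * (co (e r) x p * (shift (4 * n * r) (shift o y) p -
        (μ ∘ φ) (barm n τ (Sr n τ r (shift o y)) (shift (4 * n * r) (shift o y)) p)))
         - σ ^ 2 * lam ^ 2 / 2 * (co (e r) x p) ^ 2 := by
        intro p hp
        have hp := mem_range.1 hp
        have hlt : 4 * n * r + p < 4 * n * N := by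
          have : 4 * n * (r + 1) ≤ 4 * n * N := Nat.mul_le_mul_left _ hr
          rw [mul_add] at this
          omega
        have hdiv : (4 * n * r + p) / (4 * n) = r := by
          rw [Nat.mul_add_div (by omega), Nat.div_eq_of_lt hp, add_zero]
        have hmod : (4 * n * r + p) % (4 * n) = p := by
          rw [Nat.mul_add_mod, Nat.mod_eq_of_lt hp]
        have hcc : c (fun r => e r) (o + (4 * n * r + p)) y = lam * co (e r) x p := by
          have h1 : o ≤ o + (4 * n * r + p) ∧ o + (4 * n * r + p) < o + 4 * n * N := by omega
          simp only [c, h1, and_self, if_true, Nat.add_sub_cancel_left, hdiv, hmod, E, hr,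
            dif_pos, hx]
        rw [hcc, haφ _ _ hlt]
        unfold arm
        rw [hdiv, hmod]
        simp only [shift, Function.comp]
        ring
      rw [sum_congr rfl hterm, sum_sub_distrib, ← mul_sum, ← mul_sum]
      by_cases hb : B r
      · rw [if_pos hb]
        have h1 := (he r).1 hb
        have h2 := hco2 (e r) x
        have h3 := mul_le_mul_of_nonneg_left h1 hlam0
        have h4 : σ ^ 2 * lam ^ 2 / 2 * ∑ p ∈ range (4 * n), (co (e r) x p) ^ 2
          ≤ σ ^ 2 * lam ^ 2 / 2 * (3 / n) := mul_le_mul_of_nonneg_left h2 (by positivity)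
        have h5 : G = lam * Δ - σ ^ 2 * lam ^ 2 / 2 * (3 / n) := by
          rw [hG, hlam]; field_simp; ring
        rw [h5]
        linarith
      · rw [if_neg hb, (he r).2 hb]
        simp [hco0]
    refine le_trans ?_ (sum_le_sum hround)
    rw [← sum_filter, sum_const, nsmul_eq_mul]
    refine mul_le_mul_of_nonneg_right ?_ hG0
    exact_mod_cast hh
  have hsub : {h : Fin T → ℝ | m ≤ nbad n τ co (μ ∘ φ) Δ N (shift o (ext h))} ⊆
      ⋃ e : Fin N → Fin 4, {h | m * G ≤ ∑ t ∈ range T, (c e t (ext h) *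
      (ext h t - μ (a t (ext h))) - σ ^ 2 * (c e t (ext h)) ^ 2 / 2)} := by
    intro h hh
    obtain ⟨e, he⟩ := hpt (ext h) hh
    exact Set.mem_iUnion.2 ⟨e, he⟩
  refine (measure_mono hsub).trans ((measure_iUnion_fintype_le _ _).trans ?_)
  refine (Finset.sum_le_sum fun e _ => hmk e).trans ?_
  rw [sum_const, card_univ, Fintype.card_fun, Fintype.card_fin, Fintype.card_fin, nsmul_eq_mul]
  push_cast
  exact le_rfl

lemma three_pt {K : ℕ} (μ : Fin K → ℝ) (hμ : ConcaveSeq μ) (i j k : Fin K) (hij : i ≤ j)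
    (hjk : j < k) :
    ((k : ℕ) - (j : ℕ) : ℝ) * (μ j - μ i) ≥ ((j : ℕ) - (i : ℕ) : ℝ) * (μ k - μ j) := by
  let f : ℕ → ℝ := fun i => if h : i < K then μ ⟨i, h⟩ else 0
  have hf : ∀ i, i + 2 < K → f i + f (i + 2) ≤ 2 * f (i + 1) := by
    intro i hi
    have h1 : i < K := by omega
    have h2 : i + 1 < K := by omega
    simp only [f, hi, h1, h2, dif_pos]
    exact hμ i hi
  have hfe : ∀ i : Fin K, f i = μ i := by intro i; simp [f]
  rw [← hfe i, ← hfe j, ← hfe k]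
  have hk := k.2
  have hij' : (i : ℕ) ≤ j := hij
  have hjk' : (j : ℕ) < k := hjk
  generalize (i : ℕ) = a at *
  generalize (j : ℕ) = b at *
  generalize (k : ℕ) = c at *
  have hd : ∀ q t, q + t + 1 < K → f (q + t + 1) - f (q + t) ≤ f (q + 1) - f q := by
    intro q t
    induction t with
    | zero => intro _; simp
    | succ t ih =>
      intro h
      have h1 := ih (by omega)
      have h2 := hf (q + t) (by omega)
      have e1 : q + (t + 1) + 1 = q + t + 2 := by ring
      have e2 : q + (t + 1) = q + t + 1 := by ring
      rw [e1, e2]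
      linarith
  obtain ⟨s, rfl⟩ := Nat.exists_eq_add_of_le hij'
  obtain ⟨t, rfl⟩ := Nat.exists_eq_add_of_lt hjk'
  set D := f (a + s + 1) - f (a + s) with hD
  have hup : ∀ t, a + s + t < K → f (a + s + t) - f (a + s) ≤ t * D := by
    intro t
    induction t with
    | zero => intro _; simp
    | succ t ih =>
      intro h
      have h1 := ih (by omega)
      have h2 := hd (a + s) t (by omega)
      push_cast
      have e1 : a + s + (t + 1) = a + s + t + 1 := by ring
      rw [e1]
      linarith
  have hlo : ∀ v, v ≤ s → (v : ℝ) * D ≤ f (a + s) - f (a + s - v) := by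
    intro v
    induction v with
    | zero => intro _; simp
    | succ v ih =>
      intro h
      have h1 := ih (by omega)
      have h2 := hd (a + s - (v + 1)) (v + 1) (by omega)
      have e1 : a + s - (v + 1) + (v + 1) = a + s := by omega
      have e2 : a + s - (v + 1) + 1 = a + s - v := by omega
      rw [e1, e2] at h2
      push_cast
      linarith
  have h1 := hup (t + 1) (by omega)
  have h2 := hlo s le_rfl
  have e3 : a + s - s = a := by omega
  rw [e3] at h2
  have e4 : a + s + (t + 1) = a + s + t + 1 := by ring
  rw [e4] at h1
  push_cast at *
  have h3 := mul_le_mul_of_nonneg_left h1 (show (0 : ℝ) ≤ s by positivity)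
  have h4 := mul_le_mul_of_nonneg_left h2 (show (0 : ℝ) ≤ t + 1 by positivity)
  nlinarith

/-- piecewise constant sequence -/
def cz {β : Type*} (n : ℕ) (a b c : β) (p : ℕ) : β :=
  if p < 2 * n then a else if p < 3 * n then b else c

lemma sum_split3 (n : ℕ) (g : ℕ → ℝ) : ∑ p ∈ range (4 * n), g p =
    ∑ p ∈ range (2 * n), g p + ∑ p ∈ range n, g (2 * n + p) + ∑ p ∈ range n, g (3 * n + p) := by
  have e : 4 * n = 2 * n + n + n := by ring
  have e2 : 3 * n = 2 * n + n := by ring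
  rw [e, sum_range_add, sum_range_add, e2]

lemma sum_cz (n : ℕ) (F : ℕ → ℝ → ℝ → ℝ) (a b c a' b' c' : ℝ) :
    ∑ p ∈ range (4 * n), F p (cz n a b c p) (cz n a' b' c' p) =
    ∑ p ∈ range (2 * n), F p a a' + ∑ p ∈ range n, F (2 * n + p) b b'
      + ∑ p ∈ range n, F (3 * n + p) c c' := by
  rw [sum_split3]
  congr 1
  · congr 1
    · refine sum_congr rfl fun p hp => ?_
      have := mem_range.1 hp
      simp [cz, this]
    · refine sum_congr rfl fun p hp => ?_
      have := mem_range.1 hp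
      have h1 : ¬ (2 * n + p < 2 * n) := by omega
      have h2 : 2 * n + p < 3 * n := by omega
      simp only [cz, h1, h2, if_true, if_false]
  · refine sum_congr rfl fun p hp => ?_
    have := mem_range.1 hp
    have h1 : ¬ (3 * n + p < 2 * n) := by omega
    have h2 : ¬ (3 * n + p < 3 * n) := by omega
    simp only [cz, h1, h2, if_false]

/-- sign -/
noncomputable def sg (p : Prop) [Decidable p] : ℝ := if p then -1 else 1

lemma sg_sq (p : Prop) [Decidable p] : sg p ^ 2 = 1 := by unfold sg; split_ifs <;> norm_num

open Classical in
/-- the coefficients of the relevant deviations -/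
noncomputable def coe4 {K : ℕ} (n : ℕ) (τ : ℝ) (μ : Fin K → ℝ) (J : ℕ) (e : Fin 4) (x : Fin K)
    (p : ℕ) : ℝ :=
  if e = 1 then cz n (sg (τ ≤ μ x) / (2 * n)) 0 0 p
  else if e = 2 then
    if τ ≤ μ x then cz n 0 (sg (τ ≤ μ (clamp x (x + 1))) / (2 * n))
      (sg (τ ≤ μ (clamp x (x + 1))) / (2 * n)) p
    else cz n (sg (x.val < J) / n) (-sg (x.val < J) / n) 0 p
  else if e = 3 then
    if τ ≤ μ x then 0 else cz n (sg (J < x.val) / n) 0 (-sg (J < x.val) / n) p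
  else 0

lemma coe4_zero {K : ℕ} (n : ℕ) (τ : ℝ) (μ : Fin K → ℝ) (J : ℕ) (x : Fin K) (p : ℕ) :
    coe4 n τ μ J 0 x p = 0 := by
  simp [coe4]

lemma cz_sq (n : ℕ) (hn : 0 < n) (a b c : ℝ) (h : 2 * a ^ 2 + b ^ 2 + c ^ 2 ≤ 3 / n ^ 2) :
    ∑ p ∈ range (4 * n), (cz n a b c p) ^ 2 ≤ 3 / n := by
  have hn' : (0 : ℝ) < n := by exact_mod_cast hn
  rw [sum_cz n (fun _ u _ => u ^ 2) a b c 0 0 0]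
  simp only [sum_const, card_range, nsmul_eq_mul]
  have h1 := mul_le_mul_of_nonneg_left h hn'.le
  have h2 : (n : ℝ) * (3 / n ^ 2) = 3 / n := by field_simp
  push_cast
  linarith

lemma coe4_sq {K : ℕ} (n : ℕ) (hn : 0 < n) (τ : ℝ) (μ : Fin K → ℝ) (J : ℕ) (e : Fin 4)
    (x : Fin K) : ∑ p ∈ range (4 * n), (coe4 n τ μ J e x p) ^ 2 ≤ 3 / n := by
  classical
  have hn' : (0 : ℝ) < n := by exact_mod_cast hn
  have hinv : 0 < ((n : ℝ) ^ 2)⁻¹ := by positivity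
  unfold coe4
  have hz : ∑ p ∈ range (4 * n), (0 : ℝ) ^ 2 ≤ 3 / n := by
    rw [sum_congr rfl (g := fun _ => (0 : ℝ)) (by simp)]; simp; positivity
  split_ifs
  · refine cz_sq n hn _ _ _ ?_
    rw [div_pow, sg_sq, mul_pow]; field_simp; norm_num
  · refine cz_sq n hn _ _ _ ?_
    rw [div_pow, sg_sq, mul_pow]; field_simp; norm_num
  · refine cz_sq n hn _ _ _ ?_
    rw [div_pow, div_pow, neg_sq, sg_sq]; field_simp; norm_num
  · exact hz
  · refine cz_sq n hn _ _ _ ?_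
    rw [div_pow, div_pow, neg_sq, sg_sq]; field_simp; norm_num
  · exact hz

section
variable {K : ℕ} [NeZero K] (n : ℕ) (τ : ℝ) (μ : Fin K → ℝ) (J : ℕ) (Δ : ℝ)
  (S : St K) (y : ℕ → ℝ)

lemma dev_sum (a b c : ℝ) (k1 k2 k3 : Fin K) (hb : ∀ p, barm n τ S y p = cz n k1 k2 k3 p) :
    ∑ p ∈ range (4 * n), cz n a b c p * (y p - μ (barm n τ S y p)) =
    a * (∑ p ∈ range (2 * n), y p - 2 * n * μ k1) +
    b * (∑ p ∈ range n, y (2 * n + p) - n * μ k2) +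
    c * (∑ p ∈ range n, y (3 * n + p) - n * μ k3) := by
  have h1 : ∀ p, μ (barm n τ S y p) = cz n (μ k1) (μ k2) (μ k3) p := by
    intro p; rw [hb]; unfold cz; split_ifs <;> rfl
  simp_rw [h1]
  rw [sum_cz n (fun p u v => u * (y p - v)) a b c]
  simp only [← mul_sum, sum_sub_distrib, sum_const, card_range, nsmul_eq_mul]
  push_cast
  ring


lemma barm_cz_t (h : t1 n τ y = true) (p : ℕ) : barm n τ S y p =
    cz n (qx S) (clamp (qx S) (qx S + 1)) (clamp (qx S) (qx S + 1)) p := by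
  unfold barm cz; rw [h]; simp

lemma barm_cz_f (h : t1 n τ y = false) (p : ℕ) : barm n τ S y p =
    cz n (qx S) (clamp (qx S) (qx S - qs S)) (clamp (qx S) (qx S + qs S)) p := by
  unfold barm cz; rw [h]; simp

open Classical in
lemma facts_any (hn : 0 < n) (hbad : ¬ bad n τ (coe4 n τ μ J) μ Δ S y) :
    sg (τ ≤ μ (qx S)) * ((∑ p ∈ range (2 * n), y p) / (2 * n) - μ (qx S)) < Δ := by
  have hn' : (0 : ℝ) < n := by exact_mod_cast hn
  unfold bad at hbad
  push Not at hbad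
  have h := hbad 1 (by decide)
  have hc : ∀ p, coe4 n τ μ J 1 (qx S) p = cz n (sg (τ ≤ μ (qx S)) / (2 * n)) 0 0 p := by
    intro p; simp [coe4]
  simp_rw [hc] at h
  cases ht : t1 n τ y with
  | true =>
    rw [dev_sum n τ μ S y _ _ _ _ _ _ (barm_cz_t n τ S y ht)] at h
    refine lt_of_eq_of_lt ?_ h
    field_simp; ring
  | false =>
    rw [dev_sum n τ μ S y _ _ _ _ _ _ (barm_cz_f n τ S y ht)] at h
    refine lt_of_eq_of_lt ?_ h
    field_simp; ring

open Classical in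
lemma facts_t (hn : 0 < n) (hbad : ¬ bad n τ (coe4 n τ μ J) μ Δ S y) (ht : t1 n τ y = true)
    (hx : τ ≤ μ (qx S)) :
    sg (τ ≤ μ (clamp (qx S) (qx S + 1))) * ((∑ p ∈ range (2 * n), y (2 * n + p)) / (2 * n)
      - μ (clamp (qx S) (qx S + 1))) < Δ := by
  have hn' : (0 : ℝ) < n := by exact_mod_cast hn
  unfold bad at hbad
  push Not at hbad
  have h := hbad 2 (by decide)
  have hc : ∀ p, coe4 n τ μ J 2 (qx S) p =
      cz n 0 (sg (τ ≤ μ (clamp (qx S) (qx S + 1))) / (2 * n))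
        (sg (τ ≤ μ (clamp (qx S) (qx S + 1))) / (2 * n)) p := by
    intro p; simp [coe4, hx]
  simp_rw [hc] at h
  rw [dev_sum n τ μ S y _ _ _ _ _ _ (barm_cz_t n τ S y ht)] at h
  refine lt_of_eq_of_lt ?_ h
  have e : ∑ p ∈ range (2 * n), y (2 * n + p) =
      ∑ p ∈ range n, y (2 * n + p) + ∑ p ∈ range n, y (3 * n + p) := by
    rw [two_mul n, sum_range_add]
    congr 1
    refine sum_congr rfl fun p _ => ?_
    congr 1; ring
  rw [e]
  field_simp; ring

open Classical in
lemma facts_f (hn : 0 < n) (hbad : ¬ bad n τ (coe4 n τ μ J) μ Δ S y) (ht : t1 n τ y = false)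
    (hx : μ (qx S) < τ) :
    sg ((qx S).val < J) * (((∑ p ∈ range (2 * n), y p) / n - (∑ p ∈ range n, y (2 * n + p)) / n)
      - (2 * μ (qx S) - μ (clamp (qx S) (qx S - qs S)))) < Δ ∧
    sg (J < (qx S).val) * (((∑ p ∈ range (2 * n), y p) / n - (∑ p ∈ range n, y (3 * n + p)) / n)
      - (2 * μ (qx S) - μ (clamp (qx S) (qx S + qs S)))) < Δ := by
  have hn' : (0 : ℝ) < n := by exact_mod_cast hn
  have hx' : ¬ τ ≤ μ (qx S) := not_le.2 hx
  unfold bad at hbad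
  push Not at hbad
  constructor
  · have h := hbad 2 (by decide)
    have hc : ∀ p, coe4 n τ μ J 2 (qx S) p =
        cz n (sg ((qx S).val < J) / n) (-sg ((qx S).val < J) / n) 0 p := by
      intro p; simp [coe4, hx']
    simp_rw [hc] at h
    rw [dev_sum n τ μ S y _ _ _ _ _ _ (barm_cz_f n τ S y ht)] at h
    refine lt_of_eq_of_lt ?_ h
    field_simp; ring
  · have h := hbad 3 (by decide)
    have hc : ∀ p, coe4 n τ μ J 3 (qx S) p =
        cz n (sg (J < (qx S).val) / n) 0 (-sg (J < (qx S).val) / n) p := by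
      intro p; simp [coe4, hx']
    simp_rw [hc] at h
    rw [dev_sum n τ μ S y _ _ _ _ _ _ (barm_cz_f n τ S y ht)] at h
    refine lt_of_eq_of_lt ?_ h
    field_simp; ring

end
lemma clamp_val {K : ℕ} (x : Fin K) (v : ℕ) (h : v < K) : (clamp x v).val = v := by
  simp [clamp, h]

/-- truth of the outcome of a good round: common part -/
lemma t1_true {K : ℕ} [NeZero K] (n : ℕ) (hn : 0 < n) (τ : ℝ) (μ : Fin K → ℝ) (J : ℕ) (Δ : ℝ)
    (S : St K) (y : ℕ → ℝ) 
    (hlo : ∀ k, μ k < τ → μ k ≤ τ - Δ)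
    (hbad : ¬ bad n τ (coe4 n τ μ J) μ Δ S y) (ht : t1 n τ y = true) : τ ≤ μ (qx S) := by
  by_contra hx
  have h := facts_any n τ μ J Δ S y hn hbad
  have h2 := hlo _ (not_le.1 hx)
  simp only [sg, hx, if_false] at h
  simp only [t1, decide_eq_true_eq] at ht
  linarith

lemma t1_false {K : ℕ} [NeZero K] (n : ℕ) (hn : 0 < n) (τ : ℝ) (μ : Fin K → ℝ) (J : ℕ) (Δ : ℝ)
    (S : St K) (y : ℕ → ℝ) 
    (hhi : ∀ k, τ ≤ μ k → τ + Δ ≤ μ k)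
    (hbad : ¬ bad n τ (coe4 n τ μ J) μ Δ S y) (ht : t1 n τ y = false) : μ (qx S) < τ := by
  by_contra hx
  rw [not_lt] at hx
  have h := facts_any n τ μ J Δ S y hn hbad
  have h2 := hhi _ hx
  simp only [sg, hx, if_true] at h
  simp only [t1, decide_eq_false_iff_not, not_le] at ht
  linarith

/-- a value between two arms above the threshold is above the threshold -/
lemma conc_mid {K : ℕ} (μ : Fin K → ℝ) (hμ : ConcaveSeq μ) (c : ℝ) (i j k : Fin K)
    (hij : i ≤ j) (hjk : j ≤ k) (hi : c ≤ μ i) (hk : c ≤ μ k) : c ≤ μ j := by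
  rcases eq_or_lt_of_le hjk with rfl | hjk
  · exact hk
  have h := three_pt μ hμ i j k hij hjk
  have h1 : (0 : ℝ) < (k : ℕ) - (j : ℕ) := by
    have : (j : ℕ) < k := hjk
    have : ((j : ℕ) : ℝ) < (k : ℕ) := by exact_mod_cast this
    linarith
  have h2 : (0 : ℝ) ≤ (j : ℕ) - (i : ℕ) := by
    have : (i : ℕ) ≤ j := hij
    have : ((i : ℕ) : ℝ) ≤ (j : ℕ) := by exact_mod_cast this
    linarith
  by_contra hc
  rw [not_le] at hc
  have h3 : ((k : ℕ) - (j : ℕ) : ℝ) * (μ j - μ i) < 0 := mul_neg_of_pos_of_neg h1 (by linarith)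
  have h4 : 0 ≤ ((j : ℕ) - (i : ℕ) : ℝ) * (μ k - μ j) := mul_nonneg h2 (by linarith)
  linarith

/-- extrapolation to the right reaches the maximal good arm -/
lemma ext_right {K : ℕ} (μ : Fin K → ℝ) (hμ : ConcaveSeq μ) (z x J : Fin K) (s : ℕ)
    (hz : z.val + s = x.val) (hxJ : x.val < J.val) (hJ : J.val ≤ x.val + s) (hlt : μ x < μ J) :
    μ J ≤ 2 * μ x - μ z := by
  have h := three_pt μ hμ z x J (by rw [Fin.le_def]; omega) (by rw [Fin.lt_def]; omega)
  have e1 : ((x : ℕ) : ℝ) = (z : ℕ) + s := by exact_mod_cast hz.symm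
  have e2 : ((x : ℕ) : ℝ) < (J : ℕ) := by exact_mod_cast hxJ
  have e3 : ((J : ℕ) : ℝ) ≤ (x : ℕ) + s := by exact_mod_cast hJ
  by_contra hc
  rw [not_le] at hc
  have h1 : ((J : ℕ) - (x : ℕ) : ℝ) * (μ x - μ z) < ((J : ℕ) - (x : ℕ) : ℝ) * (μ J - μ x) :=
    mul_lt_mul_of_pos_left (by linarith) (by linarith)
  have h2 : ((J : ℕ) - (x : ℕ) : ℝ) * (μ J - μ x) ≤ ((x : ℕ) - (z : ℕ) : ℝ) * (μ J - μ x) :=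
    mul_le_mul_of_nonneg_right (by linarith) (by linarith)
  linarith

lemma ext_left {K : ℕ} (μ : Fin K → ℝ) (hμ : ConcaveSeq μ) (z x J : Fin K) (s : ℕ)
    (hz : z.val = x.val + s) (hxJ : J.val < x.val) (hJ : x.val ≤ J.val + s) (hlt : μ x < μ J) :
    μ J ≤ 2 * μ x - μ z := by
  have h := three_pt μ hμ J x z (by rw [Fin.le_def]; omega) (by rw [Fin.lt_def]; omega)
  have e1 : ((z : ℕ) : ℝ) = (x : ℕ) + s := by exact_mod_cast hz
  have e2 : ((J : ℕ) : ℝ) < (x : ℕ) := by exact_mod_cast hxJ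
  have e3 : ((x : ℕ) : ℝ) ≤ (J : ℕ) + s := by exact_mod_cast hJ
  by_contra hc
  rw [not_le] at hc
  have h1 : ((x : ℕ) - (J : ℕ) : ℝ) * (μ z - μ x) > ((x : ℕ) - (J : ℕ) : ℝ) * (μ x - μ J) :=
    mul_lt_mul_of_pos_left (by linarith) (by linarith)
  have h2 : ((x : ℕ) - (J : ℕ) : ℝ) * (μ J - μ x) ≤ ((z : ℕ) - (x : ℕ) : ℝ) * (μ J - μ x) :=
    mul_le_mul_of_nonneg_right (by linarith) (by linarith)
  linarith

/-- truth of the outcome of a good round -/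
lemma truth {K : ℕ} [NeZero K] (n : ℕ) (hn : 0 < n) (τ : ℝ) (μ : Fin K → ℝ) (hμ : ConcaveSeq μ)
    (J : Fin K) (Δ : ℝ) (S : St K) (y : ℕ → ℝ) (hΔ : 0 ≤ Δ)
    (hhi : ∀ k, τ ≤ μ k → τ + Δ ≤ μ k) (hlo : ∀ k, μ k < τ → μ k ≤ τ - Δ)
    (hJ : τ ≤ μ J) (hmax : ∀ k, τ ≤ μ k → k ≤ J)
    (hbad : ¬ bad n τ (coe4 n τ μ J) μ Δ S y) :
    ¬ kset (qx S) (qs S) (resp (t1 n τ y) (t2 n τ S y) (tR n τ S y) (tL n τ S y)) J ∧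
    (resp (t1 n τ y) (t2 n τ S y) (tR n τ S y) (tL n τ S y) = .F → qx S = J) := by
  classical
  cases ht : t1 n τ y with
  | true =>
    have hx := t1_true n hn τ μ J Δ S y hlo hbad ht
    have hxJ := hmax _ hx
    have hf := facts_t n τ μ J Δ S y hn hbad ht hx
    cases h2 : t2 n τ S y with
    | true =>
      simp only [resp, if_true, kset]
      refine ⟨?_, by simp⟩
      simp only [t2, decide_eq_true_eq] at h2
      obtain ⟨h3, h4⟩ := h2
      have : τ ≤ μ (clamp (qx S) (qx S + 1)) := by
        by_contra hc
        have h5 := hlo _ (not_le.1 hc)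
        simp only [sg, hc, if_false] at hf
        linarith
      have h6 := hmax _ this
      rw [Fin.le_def, clamp_val _ _ h3] at h6
      omega
    | false =>
      simp only [resp, if_true, kset]
      refine ⟨by simp, fun _ => ?_⟩
      by_contra hne
      have hlt : (qx S).val < J.val := lt_of_le_of_ne hxJ (fun h => hne (Fin.ext h))
      have h3 : (qx S).val + 1 < K := by have := J.2; omega
      simp only [t2, decide_eq_false_iff_not, h3, true_and, not_le] at h2
      have h4 : τ ≤ μ (clamp (qx S) (qx S + 1)) := by
        refine conc_mid μ hμ τ (qx S) _ J ?_ ?_ hx hJ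
        · rw [Fin.le_def, clamp_val _ _ h3]; omega
        · rw [Fin.le_def, clamp_val _ _ h3]; omega
      have h5 := hhi _ h4
      simp only [sg, h4, if_true] at hf
      linarith
  | false =>
    have hx := t1_false n hn τ μ J Δ S y hhi hbad ht
    have hx2 := hlo _ hx
    have hJ2 := hhi _ hJ
    have hne : (qx S).val ≠ J.val := fun h => by
      have : qx S = J := Fin.ext h
      rw [this] at hx; linarith
    obtain ⟨hfR, hfL⟩ := facts_f n τ μ J Δ S y hn hbad ht hx
    have hJK := J.2
    have hxK := (qx S).2
    -- right test
    have R1 : (qx S).val < J.val → J.val ≤ (qx S).val + qs S → tR n τ S y = true := by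
      intro h1 h2
      simp only [tR, decide_eq_true_eq]
      by_cases h3 : (qx S).val < qs S
      · exact Or.inl h3
      right
      have h4 := ext_right μ hμ (clamp (qx S) (qx S - qs S)) (qx S) J (qs S)
        (by rw [clamp_val _ _ (by omega)]; omega) h1 h2 (by linarith)
      simp only [sg, h1, if_true] at hfR
      linarith
    have R2 : J.val + qs S ≤ (qx S).val → tR n τ S y = false := by
      intro h1
      have h3 : ¬ (qx S).val < qs S := by omega
      have h4 : ¬ (qx S).val < J.val := by omega
      simp only [tR, decide_eq_false_iff_not, h3, false_or, not_le]
      have h5 : μ (qx S) ≤ μ (clamp (qx S) (qx S - qs S)) := by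
        refine conc_mid μ hμ _ J _ (qx S) ?_ ?_ (by linarith) le_rfl
        · rw [Fin.le_def, clamp_val _ _ (by omega)]; omega
        · rw [Fin.le_def, clamp_val _ _ (by omega)]; omega
      simp only [sg, h4, if_false] at hfR
      linarith
    have L1 : J.val < (qx S).val → (qx S).val ≤ J.val + qs S → tL n τ S y = true := by
      intro h1 h2
      simp only [tL, decide_eq_true_eq]
      by_cases h3 : K ≤ (qx S).val + qs S
      · exact Or.inl h3
      right
      have h4 := ext_left μ hμ (clamp (qx S) (qx S + qs S)) (qx S) J (qs S)
        (by rw [clamp_val _ _ (by omega)]) h1 h2 (by linarith)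
      simp only [sg, h1, if_true] at hfL
      linarith
    have L2 : (qx S).val + qs S ≤ J.val → tL n τ S y = false := by
      intro h1
      have h3 : ¬ K ≤ (qx S).val + qs S := by omega
      have h4 : ¬ J.val < (qx S).val := by omega
      simp only [tL, decide_eq_false_iff_not, h3, false_or, not_le]
      have h5 : μ (qx S) ≤ μ (clamp (qx S) (qx S + qs S)) := by
        refine conc_mid μ hμ _ (qx S) _ J ?_ ?_ le_rfl (by linarith)
        · rw [Fin.le_def, clamp_val _ _ (by omega)]; omega
        · rw [Fin.le_def, clamp_val _ _ (by omega)]; omega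
      simp only [sg, h4, if_false] at hfL
      linarith
    cases hR : tR n τ S y <;> cases hL : tL n τ S y <;>
      simp only [hR, hL, resp, kset, dst, Bool.false_eq_true, if_true, if_false, reduceCtorEq,
        imp_false, false_imp_iff, and_true, not_le] at R1 R2 L1 L2 ⊢ <;> omega

lemma truth_empty {K : ℕ} [NeZero K] (n : ℕ) (hn : 0 < n) (τ : ℝ) (μ : Fin K → ℝ)
    (J : ℕ) (Δ : ℝ) (S : St K) (y : ℕ → ℝ)
    (hlo : ∀ k, μ k < τ → μ k ≤ τ - Δ) (hem : ∀ k, μ k < τ)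
    (hbad : ¬ bad n τ (coe4 n τ μ J) μ Δ S y) :
    resp (t1 n τ y) (t2 n τ S y) (tR n τ S y) (tL n τ S y) ≠ .F := by
  cases ht : t1 n τ y with
  | true =>
    have hx := t1_true n hn τ μ J Δ S y hlo hbad ht
    linarith [hem (qx S)]
  | false => unfold resp; simp only [Bool.false_eq_true, if_false]; split_ifs <;> simp
lemma nbad_succ {K : ℕ} [NeZero K] (n : ℕ) (τ : ℝ) (co : Fin 4 → Fin K → ℕ → ℝ)
    (μ : Fin K → ℝ) (Δ : ℝ) (N : ℕ) (y : ℕ → ℝ) :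
    nbad n τ co μ Δ N y ≤ nbad n τ co μ Δ (N + 1) y ∧
    (bad n τ co μ Δ (Sr n τ N y) (shift (4 * n * N) y) →
      nbad n τ co μ Δ (N + 1) y = nbad n τ co μ Δ N y + 1) := by
  classical
  unfold nbad
  rw [range_add_one, filter_insert]
  split_ifs with h
  · rw [card_insert_of_notMem (by simp)]
    exact ⟨by omega, fun _ => rfl⟩
  · exact ⟨le_rfl, fun h' => absurd h' h⟩

lemma upd_votes {K : ℕ} [NeZero K] (S : St K) (r : Resp) :
    (r = .F → ∑ k, (upd S r).2 k = ∑ k, S.2 k + 1) ∧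
    (r ≠ .F → ∑ k, (upd S r).2 k = ∑ k, S.2 k) := by
  classical
  constructor
  · intro h
    simp [upd, h, sum_add_distrib]
  · intro h
    simp [upd, h]

lemma upd_wrong {K : ℕ} [NeZero K] (S : St K) (r : Resp) (J : Fin K) :
    ((upd S r).1 J + ∑ k ∈ univ.erase J, (upd S r).2 k ≤
      S.1 J + ∑ k ∈ univ.erase J, S.2 k + 1) ∧
    (¬ kset (qx S) (qs S) r J → (r = .F → qx S = J) →
      (upd S r).1 J + ∑ k ∈ univ.erase J, (upd S r).2 k = S.1 J + ∑ k ∈ univ.erase J, S.2 k) := by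
  classical
  by_cases h : r = .F
  · subst h
    have e : (upd S .F).1 J = S.1 J := by simp [upd, kset]
    have e2 : ∑ k ∈ univ.erase J, (upd S .F).2 k =
        ∑ k ∈ univ.erase J, S.2 k + if qx S ∈ univ.erase J then 1 else 0 := by
      simp only [upd, true_and, sum_add_distrib, sum_ite_eq']
    rw [e, e2]
    constructor
    · split_ifs <;> omega
    · intro _ h2
      have := h2 rfl
      simp [this]
  · simp only [upd, h, false_and, if_false, add_zero]
    constructor
    · split_ifs <;> omega
    · intro h1 _
      simp [h1]

lemma upd_wt {K : ℕ} [NeZero K] (S : St K) (r : Resp) :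
    (r = .F → ∑ k, wt (upd S r) k = ∑ k, wt S k) ∧
    (r ≠ .F → (∑ k, wt (upd S r) k) * (8 / 5) ≤ ∑ k, wt S k) := by
  classical
  constructor
  · rintro rfl
    simp [upd, wt, kset]
  · intro h
    obtain ⟨⟨h1, h2⟩, h3, h4⟩ := q_spec S
    have key : (∑ j, wt S j) / 2 ≤ ∑ j : Fin K with kset (qx S) (qs S) r j.val, wt S j := by
      cases r with
      | F => exact absurd rfl h
      | A => convert h1; rfl
      | B => convert h2; rfl
      | C => convert h4; rfl
      | D => convert h3; rfl
    have e : ∀ k : Fin K, wt (upd S r) k =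
        wt S k - 3 / 4 * (if kset (qx S) (qs S) r k.val then wt S k else 0) := by
      intro k
      unfold wt upd
      by_cases hk : kset (qx S) (qs S) r k.val
      · simp only [hk, if_true, pow_succ]; ring
      · simp [hk]
    simp_rw [e]
    rw [sum_sub_distrib, ← mul_sum, ← sum_filter]
    linarith

lemma inv_wt {K : ℕ} [NeZero K] (n : ℕ) (τ : ℝ) (y : ℕ → ℝ) (r : ℕ) :
    (∑ k, wt (Sr n τ r y : St K) k) * (8 / 5) ^ r ≤
      K * (8 / 5) ^ (∑ k, (Sr n τ r y : St K).2 k) := by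
  induction r with
  | zero => simp [Sr, wt]
  | succ r ih =>
    simp only [Sr, stp]
    generalize resp _ _ _ _ = q
    generalize (Sr n τ r y : St K) = S at *
    by_cases hq : q = .F
    · rw [(upd_wt S q).1 hq, (upd_votes S q).1 hq, pow_succ, pow_succ]
      linarith
    · rw [(upd_votes S q).2 hq, pow_succ]
      have := (upd_wt S q).2 hq
      have h2 := mul_le_mul_of_nonneg_right this (show (0 : ℝ) ≤ (8 / 5) ^ r by positivity)
      linarith

lemma inv_wrong {K : ℕ} [NeZero K] (n : ℕ) (hn : 0 < n) (τ : ℝ) (μ : Fin K → ℝ)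
    (hμ : ConcaveSeq μ) (J : Fin K) (Δ : ℝ) (y : ℕ → ℝ) (hΔ : 0 ≤ Δ)
    (hhi : ∀ k, τ ≤ μ k → τ + Δ ≤ μ k) (hlo : ∀ k, μ k < τ → μ k ≤ τ - Δ)
    (hJ : τ ≤ μ J) (hmax : ∀ k, τ ≤ μ k → k ≤ J) (r : ℕ) :
    (Sr n τ r y : St K).1 J + ∑ k ∈ univ.erase J, (Sr n τ r y : St K).2 k ≤
      nbad n τ (coe4 n τ μ J) μ Δ r y := by
  induction r with
  | zero => simp [Sr]
  | succ r ih =>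
    have h1 := nbad_succ n τ (coe4 n τ μ J) μ Δ r y
    simp only [Sr, stp]
    by_cases hb : bad n τ (coe4 n τ μ J) μ Δ (Sr n τ r y) (shift (4 * n * r) y)
    · have h2 := h1.2 hb
      refine (upd_wrong _ _ J).1.trans ?_
      omega
    · have h3 := truth n hn τ μ hμ J Δ _ _ hΔ hhi hlo hJ hmax hb
      rw [(upd_wrong _ _ J).2 h3.1 h3.2]
      omega

lemma inv_empty {K : ℕ} [NeZero K] (n : ℕ) (hn : 0 < n) (τ : ℝ) (μ : Fin K → ℝ)
    (J : ℕ) (Δ : ℝ) (y : ℕ → ℝ)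
    (hlo : ∀ k, μ k < τ → μ k ≤ τ - Δ) (hem : ∀ k, μ k < τ) (r : ℕ) :
    ∑ k, (Sr n τ r y : St K).2 k ≤ nbad n τ (coe4 n τ μ J) μ Δ r y := by
  induction r with
  | zero => simp [Sr]
  | succ r ih =>
    have h1 := nbad_succ n τ (coe4 n τ μ J) μ Δ r y
    simp only [Sr, stp]
    by_cases hb : bad n τ (coe4 n τ μ J) μ Δ (Sr n τ r y) (shift (4 * n * r) y)
    · have h2 := h1.2 hb
      rw [h2]
      refine le_trans ?_ (Nat.succ_le_succ ih)
      generalize resp _ _ _ _ = q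
      by_cases hq : q = .F
      · exact ((upd_votes _ q).1 hq).le
      · rw [(upd_votes _ q).2 hq]; omega
    · have h3 := truth_empty n hn τ μ J Δ _ _ hlo hem hb
      rw [(upd_votes _ _).2 h3]
      omega

lemma numeric (K m a b v : ℕ) (hK : K < 2 ^ (m + 1)) (hab : a + b < m) (hv : v < m)
    (h : (1 / 4 : ℝ) ^ a * (8 / 5) ^ (6 * m) ≤ K * (8 / 5) ^ (b + v)) : False := by
  obtain ⟨q, rfl⟩ : ∃ q, m = q + 1 := ⟨m - 1, by omega⟩
  have hK' : (K : ℝ) ≤ 2 ^ (q + 2) := by exact_mod_cast hK.le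
  have h1 : (8 / 5 : ℝ) ^ (6 * (q + 1)) ≤ 4 ^ a * (K * (8 / 5) ^ (b + v)) := by
    have := mul_le_mul_of_nonneg_left h (show (0 : ℝ) ≤ 4 ^ a by positivity)
    rwa [← mul_assoc, ← mul_pow, show (4 : ℝ) * (1 / 4) = 1 by norm_num, one_pow, one_mul] at this
  have h2 : (4 : ℝ) ^ a * (K * (8 / 5) ^ (b + v)) ≤
      4 ^ q * (8 / 5) ^ q * 2 ^ (q + 2) := by
    have e1 : (8 / 5 : ℝ) ^ b ≤ 4 ^ b := pow_le_pow_left₀ (by norm_num) (by norm_num) b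
    have e2 : (8 / 5 : ℝ) ^ v ≤ (8 / 5) ^ q := pow_le_pow_right₀ (by norm_num) (by omega)
    have e3 : (4 : ℝ) ^ (a + b) ≤ 4 ^ q := pow_le_pow_right₀ (by norm_num) (by omega)
    calc (4 : ℝ) ^ a * (K * (8 / 5) ^ (b + v))
        = (4 ^ a * (8 / 5) ^ b) * (8 / 5) ^ v * K := by rw [pow_add]; ring
      _ ≤ (4 ^ a * 4 ^ b) * (8 / 5) ^ q * 2 ^ (q + 2) := by gcongr
      _ ≤ 4 ^ q * (8 / 5) ^ q * 2 ^ (q + 2) := by rw [← pow_add]; gcongr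
  have h3 : (4 : ℝ) ^ q * (8 / 5) ^ q * 2 ^ (q + 2) = (64 / 5) ^ q * 4 := by
    rw [pow_add, ← mul_pow, ← mul_assoc, ← mul_pow]; norm_num
  have h4 : (8 / 5 : ℝ) ^ (6 * (q + 1)) = ((8 / 5) ^ 6) ^ q * (8 / 5) ^ 6 := by
    rw [mul_add, pow_add, pow_mul]
  have h5 : (64 / 5 : ℝ) ^ q ≤ ((8 / 5) ^ 6) ^ q := 
    pow_le_pow_left₀ (by norm_num) (by norm_num) q
  have h6 : (0 : ℝ) < (64 / 5) ^ q := by positivity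
  have h7 : (64 / 5 : ℝ) ^ q * 5 ≤ ((8 / 5) ^ 6) ^ q * (8 / 5) ^ 6 := by
    gcongr; norm_num
  linarith

lemma concl {K : ℕ} [NeZero K] (n : ℕ) (hn : 0 < n) (τ : ℝ) (μ : Fin K → ℝ)
    (hμ : ConcaveSeq μ) (J : Fin K) (Δ : ℝ) (y : ℕ → ℝ) (hΔ : 0 ≤ Δ)
    (hhi : ∀ k, τ ≤ μ k → τ + Δ ≤ μ k) (hlo : ∀ k, μ k < τ → μ k ≤ τ - Δ)
    (hJ : τ ≤ μ J) (hmax : ∀ k, τ ≤ μ k → k ≤ J) (m : ℕ) (hm : K < 2 ^ (m + 1))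
    (hb : nbad n τ (coe4 n τ μ J) μ Δ (6 * m) y < m) (k : Fin K) :
    m ≤ (Sr n τ (6 * m) y : St K).2 k ↔ k = J := by
  have h1 := inv_wrong n hn τ μ hμ J Δ y hΔ hhi hlo hJ hmax (6 * m)
  have h2 := inv_wt (K := K) n τ y (6 * m)
  generalize (Sr n τ (6 * m) y : St K) = S at *
  constructor
  · intro hk
    by_contra hne
    have := single_le_sum (f := S.2) (s := univ.erase J) (fun _ _ => Nat.zero_le _)
      (mem_erase.2 ⟨hne, mem_univ k⟩)
    omega
  · rintro rfl
    by_contra hlt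
    rw [not_le] at hlt
    refine numeric K m (S.1 k) (∑ j ∈ univ.erase k, S.2 j) (S.2 k) hm (by omega) hlt ?_
    rw [sum_erase_add _ _ (mem_univ k)]
    refine le_trans ?_ h2
    gcongr
    exact single_le_sum (f := wt S) (fun j _ => (wt_pos S j).le) (mem_univ k)

lemma concl_empty {K : ℕ} [NeZero K] (n : ℕ) (hn : 0 < n) (τ : ℝ) (μ : Fin K → ℝ)
    (J : ℕ) (Δ : ℝ) (y : ℕ → ℝ)
    (hlo : ∀ k, μ k < τ → μ k ≤ τ - Δ) (hem : ∀ k, μ k < τ) (m N : ℕ)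
    (hb : nbad n τ (coe4 n τ μ J) μ Δ N y < m) (k : Fin K) :
    ¬ m ≤ (Sr n τ N y : St K).2 k := by
  have h1 := inv_empty n hn τ μ J Δ y hlo hem N
  have := single_le_sum (f := (Sr n τ N y : St K).2) (s := univ) (fun _ _ => Nat.zero_le _)
      (mem_univ k)
  omega
lemma conc_rev {K : ℕ} (μ : Fin K → ℝ) (hμ : ConcaveSeq μ) : ConcaveSeq (μ ∘ Fin.rev) := by
  intro i hi
  have h := hμ (K - (i + 3)) (by omega)
  have e1 : Fin.rev (⟨i, by omega⟩ : Fin K) = ⟨K - (i + 3) + 2, by omega⟩ := by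
    apply Fin.ext; simp [Fin.val_rev]; omega
  have e2 : Fin.rev (⟨i + 1, by omega⟩ : Fin K) = ⟨K - (i + 3) + 1, by omega⟩ := by
    apply Fin.ext; simp [Fin.val_rev]; omega
  have e3 : Fin.rev (⟨i + 2, by omega⟩ : Fin K) = ⟨K - (i + 3), by omega⟩ := by
    apply Fin.ext; simp [Fin.val_rev]
  simp only [Function.comp_apply, e1, e2, e3]
  linarith

/-- classification from the final states of the two searches -/
def clas {K : ℕ} (m : ℕ) (SA SB : St K) (k : Fin K) : Prop :=
  ∃ lo hi : Fin K, m ≤ SA.2 hi ∧ m ≤ SB.2 (Fin.rev lo) ∧ lo ≤ k ∧ k ≤ hi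

lemma clas_correct {K : ℕ} [NeZero K] (n : ℕ) (hn : 0 < n) (τ : ℝ) (μ : Fin K → ℝ)
    (hμ : ConcaveSeq μ) (Δ : ℝ) (hΔ : 0 ≤ Δ)
    (hhi : ∀ k, τ ≤ μ k → τ + Δ ≤ μ k) (hlo : ∀ k, μ k < τ → μ k ≤ τ - Δ)
    (m : ℕ) (hm : K < 2 ^ (m + 1)) :
    ∃ JA JB : ℕ, ∀ yA yB : ℕ → ℝ,
      nbad n τ (coe4 n τ μ JA) μ Δ (6 * m) yA < m →
      nbad n τ (coe4 n τ (μ ∘ Fin.rev) JB) (μ ∘ Fin.rev) Δ (6 * m) yB < m →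
      ∀ k : Fin K, clas m (Sr n τ (6 * m) yA) (Sr n τ (6 * m) yB) k ↔ τ ≤ μ k := by
  classical
  by_cases hne : ({k | τ ≤ μ k} : Finset (Fin K)).Nonempty
  · obtain ⟨J, hJ, hJmax⟩ := exists_max_image _ id hne
    obtain ⟨I, hI, hImin⟩ := exists_min_image _ id hne
    simp only [mem_filter, mem_univ, true_and, id] at hJ hJmax hI hImin
    refine ⟨J, Fin.rev I, fun yA yB hA hB k => ?_⟩
    have h1 := concl n hn τ μ hμ J Δ yA hΔ hhi hlo hJ hJmax m hm hA
    have h2 := concl n hn τ (μ ∘ Fin.rev) (conc_rev μ hμ) (Fin.rev I) Δ yB hΔ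
      (fun k => hhi _) (fun k => hlo _) (by simpa using hI)
      (fun k hk => by
        have := hImin _ hk
        rw [← Fin.rev_le_rev]; simpa using this) m hm hB
    unfold clas
    simp only [h1, h2]
    constructor
    · rintro ⟨lo, hi, rfl, h4, h5, h6⟩
      rw [Fin.rev_inj] at h4
      subst h4
      exact conc_mid μ hμ τ lo k hi h5 h6 hI hJ
    · intro hk
      exact ⟨I, J, rfl, rfl, hImin k hk, hJmax k hk⟩
  · have hem : ∀ k, μ k < τ := by
      intro k
      by_contra hc
      exact hne ⟨k, by simpa using hc⟩
    refine ⟨0, 0, fun yA yB hA hB k => ?_⟩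
    have h1 := concl_empty n hn τ μ 0 Δ yA hlo hem m _ hA
    constructor
    · rintro ⟨lo, hi, h3, -⟩
      exact absurd h3 (h1 hi)
    · intro hk
      exact absurd hk (not_le.2 (hem k))

/-- sampling rule of the algorithm -/
noncomputable def alg {K : ℕ} [NeZero K] (n m : ℕ) (τ : ℝ) (t : ℕ) (y : ℕ → ℝ) : Fin K :=
  if t < 4 * n * (6 * m) then arm n τ t y
  else if t < 4 * n * (6 * m) + 4 * n * (6 * m) then
    Fin.rev (arm n τ (t - 4 * n * (6 * m)) (shift (4 * n * (6 * m)) y))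
  else 0

lemma measurable_alg {K : ℕ} [NeZero K] (n m : ℕ) (τ : ℝ) (t : ℕ) :
    Measurable (alg n m τ t : (ℕ → ℝ) → Fin K) := by
  unfold alg
  split_ifs
  · exact measurable_arm n τ t
  · have h1 : Measurable (Fin.rev : Fin K → Fin K) := measurable_of_countable _
    have h2 := h1.comp ((measurable_arm n τ (t - 4 * n * (6 * m))).comp
      (measurable_shift (4 * n * (6 * m))))
    simpa only [Function.comp_def] using h2
  · exact measurable_const

lemma alg_congr {K : ℕ} [NeZero K] (n m : ℕ) (τ : ℝ) (t : ℕ) (y y' : ℕ → ℝ)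
    (h : ∀ i < t, y i = y' i) : (alg n m τ t y : Fin K) = alg n m τ t y' := by
  unfold alg
  split_ifs with h1 h2
  · exact arm_congr n τ t y y' h
  · rw [arm_congr n τ (t - 4 * n * (6 * m)) (shift (4 * n * (6 * m)) y)
      (shift (4 * n * (6 * m)) y') fun i hi => h _ (by omega)]
  · rfl

open Classical in
/-- classification rule of the algorithm -/
noncomputable def qhat {K : ℕ} [NeZero K] (T n m : ℕ) (τ : ℝ) (h : Fin T → ℝ) (k : Fin K) : Bool :=
  decide (clas m (Sr n τ (6 * m) (ext h)) (Sr n τ (6 * m) (shift (4 * n * (6 * m)) (ext h))) k)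

lemma measurable_qhat {K : ℕ} [NeZero K] (T n m : ℕ) (τ : ℝ) :
    Measurable (qhat T n m τ : (Fin T → ℝ) → Fin K → Bool) := by
  classical
  have h1 : Measurable (fun q : St K × St K => fun k : Fin K => decide (clas m q.1 q.2 k)) :=
    measurable_of_countable _
  have h2 : Measurable (fun h : Fin T → ℝ => (Sr n τ (6 * m) (ext h) : St K)) := by
    have := (measurable_Sr (K := K) n τ (6 * m)).comp (measurable_ext (t := T))
    simpa only [Function.comp_def] using this
  have h3 : Measurable (fun h : Fin T → ℝ =>
      (Sr n τ (6 * m) (shift (4 * n * (6 * m)) (ext h)) : St K)) := by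
    have := (measurable_Sr (K := K) n τ (6 * m)).comp
      ((measurable_shift (4 * n * (6 * m))).comp (measurable_ext (t := T)))
    simpa only [Function.comp_def] using this
  have h4 := h1.comp (h2.prodMk h3)
  have e : (qhat T n m τ : (Fin T → ℝ) → Fin K → Bool) =
      (fun q : St K × St K => fun k : Fin K => decide (clas m q.1 q.2 k)) ∘ fun a =>
      (Sr n τ (6 * m) (ext a), Sr n τ (6 * m) (shift (4 * n * (6 * m)) (ext a))) := by
    funext h k
    simp only [qhat, Function.comp_apply]
  rw [e]
  exact h4

lemma final_num (K T n m : ℕ) (hK : 2 ^ m ≤ K) (hn : 0 < n) (hT : T < 48 * m * (n + 1)) (D σ : ℝ)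
    (hσ : 0 < σ) :
    (4 : ENNReal) ^ (6 * m) * ENNReal.ofReal (Real.exp (-(m * (n * D ^ 2 / (6 * σ ^ 2))))) +
    (4 : ENNReal) ^ (6 * m) * ENNReal.ofReal (Real.exp (-(m * (n * D ^ 2 / (6 * σ ^ 2))))) ≤
    ENNReal.ofReal (3 * Real.exp (-(1 / 576 : ℝ) * T * D ^ 2 / σ ^ 2 + 12 * Real.log K)) := by
  have hKpos : (0 : ℝ) < K := by
    have : 0 < K := lt_of_lt_of_le (by positivity) hK
    exact_mod_cast this
  have e4 : (4 : ENNReal) ^ (6 * m) = ENNReal.ofReal (4 ^ (6 * m)) := by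
    rw [ENNReal.ofReal_pow (by norm_num)]; norm_num
  rw [e4, ← ENNReal.ofReal_mul (by positivity), ← ENNReal.ofReal_add (by positivity) (by positivity)]
  refine ENNReal.ofReal_le_ofReal ?_
  have h1 : (4 : ℝ) ^ (6 * m) ≤ Real.exp (12 * Real.log K) := by
    have : Real.exp (12 * Real.log K) = (K : ℝ) ^ 12 := by
      rw [mul_comm, Real.exp_mul, Real.exp_log hKpos]; norm_cast
    rw [this]
    have e : (4 : ℝ) ^ (6 * m) = (2 ^ m) ^ 12 := by
      rw [← pow_mul, show (4 : ℝ) = 2 ^ 2 by norm_num, ← pow_mul]; congr 1; ring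
    rw [e]
    have : (2 : ℝ) ^ m ≤ K := by exact_mod_cast hK
    gcongr
  have h2 : -(m * (n * D ^ 2 / (6 * σ ^ 2))) ≤ -(1 / 576 : ℝ) * T * D ^ 2 / σ ^ 2 := by
    have hTn : T ≤ 96 * m * n := by nlinarith
    have hTr : (T : ℝ) ≤ 96 * m * n := by exact_mod_cast hTn
    have e1 : -(m * (n * D ^ 2 / (6 * σ ^ 2))) = -(1 / 576 : ℝ) * (96 * m * n) * (D ^ 2 / σ ^ 2) := by
      field_simp; ring
    have e2 : -(1 / 576 : ℝ) * T * D ^ 2 / σ ^ 2 = -(1 / 576 : ℝ) * T * (D ^ 2 / σ ^ 2) := by ring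
    rw [e1, e2]
    have : (0 : ℝ) ≤ D ^ 2 / σ ^ 2 := by positivity
    nlinarith [mul_le_mul_of_nonneg_right hTr this]
  have h3 := Real.exp_le_exp.2 h2
  rw [Real.exp_add]
  have h4 := mul_le_mul h1 h3 (Real.exp_pos _).le (Real.exp_pos _).le
  have h5 := mul_pos (Real.exp_pos (-(1 / 576 : ℝ) * T * D ^ 2 / σ ^ 2)) (Real.exp_pos (12 * Real.log K))
  linarith

end CTB

/-- Problem dependent upper bound for the concave thresholding bandit problem
(Theorem 4): for `T > 108 log K` there is a parameter free fixed-budget strategy (PD-CTB)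
whose probability of error on every sub-Gaussian bandit problem with concave means is at
most `3·exp(−(1/576)·T·Δ_min²/σ² + 12·log K)`. -/
theorem concave_upper_bound
    (K T : ℕ) (hK : 3 ≤ K) (hT : 108 * Real.log K < T) (τ : ℝ) :
    ∃ (π : (t : ℕ) → (Fin t → ℝ) → Fin K) (Qhat : (Fin T → ℝ) → Fin K → Bool),
      (∀ t, Measurable (π t)) ∧ Measurable Qhat ∧
      ∀ (σ : ℝ), 0 < σ → ∀ (ν : Fin K → Measure ℝ) (μ : Fin K → ℝ),
        (∀ k, IsProbabilityMeasure (ν k)) →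
        (∀ k, ∫ x, x ∂ν k = μ k) →
        (∀ k, IsSubGaussianArm (σ ^ 2) (μ k) (ν k)) →
        ConcaveSeq μ →
        histMeasure ν π T (errSet Qhat μ τ) ≤
          ENNReal.ofReal (3 * Real.exp (-(1 / 576 : ℝ) * T * (⨅ k, |μ k - τ|) ^ 2 / σ ^ 2
            + 12 * Real.log K)) := by
  have : NeZero K := ⟨by omega⟩
  set m := Nat.log 2 K with hm
  have hm1 : 2 ^ m ≤ K := Nat.pow_log_le_self 2 (by omega)
  have hm2 : K < 2 ^ (m + 1) := Nat.lt_pow_succ_log_self (by norm_num) K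
  have hm0 : 0 < m := Nat.log_pos (by norm_num) (by omega)
  set n := T / (48 * m) with hnd
  have hTm : 48 * m ≤ T := by
    have h1 : (m : ℝ) * Real.log 2 ≤ Real.log K := by
      rw [← Real.log_pow]
      exact Real.log_le_log (by positivity) (by exact_mod_cast hm1)
    have h2 := Real.log_two_gt_d9
    have h3 : (0 : ℝ) < m := by exact_mod_cast hm0
    have h4 : (48 * m : ℝ) ≤ T := by nlinarith
    exact_mod_cast h4
  have hn : 0 < n := Nat.div_pos hTm (by omega)
  have hT1 : 48 * m * n ≤ T := Nat.mul_div_le T (48 * m)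
  have hT2 : T < 48 * m * (n + 1) := by
    have := Nat.lt_mul_div_succ T (show 0 < 48 * m by omega)
    exact this
  have hT3 : 4 * n * (6 * m) + 4 * n * (6 * m) = 48 * m * n := by ring
  refine ⟨fun t h => CTB.alg n m τ t (CTB.ext h), CTB.qhat T n m τ, fun t => ?_,
    CTB.measurable_qhat T n m τ, ?_⟩
  · have h := (CTB.measurable_alg (K := K) n m τ t).comp (CTB.measurable_ext (t := t))
    simpa only [Function.comp_def] using h
  intro σ hσ ν μ hν _ hs hμ
  set D := ⨅ k, |μ k - τ| with hD
  have hDle : ∀ k, D ≤ |μ k - τ| := fun k => ciInf_le (Set.finite_range _).bddBelow k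
  have hD0 : 0 ≤ D := Real.iInf_nonneg fun k => abs_nonneg _
  have hhi : ∀ k, τ ≤ μ k → τ + D ≤ μ k := by
    intro k hk
    have := hDle k
    rw [abs_of_nonneg (by linarith)] at this
    linarith
  have hlo : ∀ k, μ k < τ → μ k ≤ τ - D := by
    intro k hk
    have := hDle k
    rw [abs_of_neg (by linarith)] at this
    linarith
  obtain ⟨JA, JB, hJ⟩ := CTB.clas_correct n hn τ μ hμ D hD0 hhi hlo m hm2
  have hA := CTB.search_prob n hn τ ν hν μ σ hσ hs (CTB.alg n m τ) (CTB.measurable_alg n m τ)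
    (CTB.alg_congr n m τ) 0 T (6 * m) m id (by omega)
    (by
      intro t y ht
      have e : CTB.shift 0 y = y := by funext i; simp [CTB.shift]
      rw [e, zero_add, id]
      simp only [CTB.alg, ht, if_true])
    (CTB.coe4 n τ μ JA) (CTB.coe4_zero n τ μ JA) (CTB.coe4_sq n hn τ μ JA) D hD0
  have hB := CTB.search_prob n hn τ ν hν μ σ hσ hs (CTB.alg n m τ) (CTB.measurable_alg n m τ)
    (CTB.alg_congr n m τ) (4 * n * (6 * m)) T (6 * m) m Fin.rev (by omega)
    (by
      intro t y ht
      have h1 : ¬ (4 * n * (6 * m) + t < 4 * n * (6 * m)) := by omega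
      have h2 : 4 * n * (6 * m) + t < 4 * n * (6 * m) + 4 * n * (6 * m) := by omega
      simp only [CTB.alg, h1, h2, if_true, if_false, Nat.add_sub_cancel_left])
    (CTB.coe4 n τ (μ ∘ Fin.rev) JB) (CTB.coe4_zero n τ _ JB) (CTB.coe4_sq n hn τ _ JB) D hD0
  refine le_trans (measure_mono ?_) ((measure_union_le _ _).trans
    ((add_le_add hA hB).trans (CTB.final_num K T n m hm1 hn hT2 D σ hσ)))
  intro h hh
  by_contra hc
  simp only [Set.mem_union, Set.mem_ofPred_eq, not_or, not_le] at hc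
  have e : CTB.shift 0 (CTB.ext h) = CTB.ext h := by funext i; simp [CTB.shift]
  rw [e] at hc
  have h3 := hJ _ _ hc.1 hc.2
  obtain ⟨k, hk⟩ := hh
  apply hk
  rw [← h3 k]
  simp only [CTB.qhat, decide_eq_true_eq]
end
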